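/- Let p_v = 2^{-𝒩_V(v)·(n+5)} for every vertex v ≠ s of 𝔅_n, and let π_0' be the twin policy of π_0. Then each of Bland(𝔇_n, π_0', 𝒩_{𝔇_n}), Dantzig(𝔇_n, π_0'), and LargestIncrease(𝔇_n, π_0') performs at least 2^n − 1 improving switches before terminating. -/

import Mathlib

/-! ## The Markov decision process `𝔅_n` -/

/-- Vertices of the MDP `𝔅_n`: a transportation vertex `t`, a sink `s`, a dummy vertex `d`,
and vertices `a i`, `b i` for `i ∈ {1,…,n}`. -/
inductive BV : Type where
  | t : BV
  | s : BV
  | d : BV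
  | a : ℕ → BV
  | b : ℕ → BV
deriving DecidableEq

/-- The vertex `a i` for `i ∈ {1,…,n+1}`, with the convention `a (n+1) = s`. -/
def aN (n i : ℕ) : BV := if i = n + 1 then BV.s else BV.a i

/-- The vertex `b i` for `i ∈ {1,…,n+1}`, with the convention `b (n+1) = d`. -/
def bN (n i : ℕ) : BV := if i = n + 1 then BV.d else BV.b i

/-- The vertex set of `𝔅_n`. -/
def IsBVertex (n : ℕ) : BV → Prop
  | BV.t => True
  | BV.s => True
  | BV.d => True
  | BV.a i => 1 ≤ i ∧ i ≤ n
  | BV.b i => 1 ≤ i ∧ i ≤ n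

/-- The edge relation of `𝔅_n`: travel, enter, skip, board, stay, leave edges,
the edge `(d,s)` and the self-loop `(s,s)`. -/
def BEdge (n : ℕ) (u v : BV) : Prop :=
  (∃ i, 1 ≤ i ∧ i ≤ n ∧ u = BV.t ∧ v = BV.a i) ∨
  (∃ i, 1 ≤ i ∧ i ≤ n ∧ u = BV.a i ∧ v = BV.b i) ∨
  (∃ i, 1 ≤ i ∧ i ≤ n ∧ u = BV.a i ∧ v = aN n (i + 1)) ∨
  (∃ i, 1 ≤ i ∧ i ≤ n ∧ u = BV.a i ∧ v = BV.t) ∨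
  (∃ i, 1 ≤ i ∧ i ≤ n ∧ u = BV.b i ∧ v = bN n (i + 1)) ∨
  (∃ i, 1 ≤ i ∧ i ≤ n ∧ u = BV.b i ∧ v = aN n (i + 1)) ∨
  (u = BV.d ∧ v = BV.s) ∨ (u = BV.s ∧ v = BV.s)

/-- The reward function of `𝔅_n`: `r(enter i) = 2^i`, `r(stay i) = 3/4`,
`r(board i) = -2^i + 5/4`, and reward `0` on all other edges. -/
def rB (n : ℕ) (u v : BV) : ℚ :=
  match u, v with
  | BV.a i, BV.b j => if i = j then 2 ^ i else 0
  | BV.a i, BV.t => -(2 ^ i) + 5 / 4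
  | BV.b i, BV.b j => if j = i + 1 then 3 / 4 else 0
  | BV.b i, BV.d => if i = n then 3 / 4 else 0
  | _, _ => 0

/-- A policy for `𝔅_n` chooses an outgoing edge at every vertex. -/
def IsBPolicy (n : ℕ) (π : BV → BV) : Prop := ∀ u, IsBVertex n u → BEdge n u (π u)

/-- A policy is weak unichain if it reaches the sink `s` from every vertex. -/
def BWeakUnichain (n : ℕ) (π : BV → BV) : Prop :=
  ∀ u, IsBVertex n u → ∃ k, π^[k] u = BV.s

open Classical in
/-- The value of a vertex `v` w.r.t. a (weak unichain) policy `π`: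
the sum of the rewards along the path that `π` takes from `v` to the sink `s`. -/
noncomputable def BVal (n : ℕ) (π : BV → BV) (v : BV) : ℚ :=
  if h : ∃ k, π^[k] v = BV.s then
    ∑ i ∈ Finset.range (Nat.find h), rB n (π^[i] v) (π^[i + 1] v)
  else 0

/-- The reduced costs of the edge `(u,v)` w.r.t. the policy `π`. -/
noncomputable def zB (n : ℕ) (π : BV → BV) (u v : BV) : ℚ :=
  rB n u v + BVal n π v - BVal n π u

/-- The edge `(u,v)` is an improving switch for `π` if its reduced costs are positive. -/
def BImproving (n : ℕ) (π : BV → BV) (u v : BV) : Prop :=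
  BEdge n u v ∧ 0 < zB n π u v

/-- The Bland numbering `𝒩_{𝔅_n}` of the edges of `𝔅_n`. -/
def NB (n : ℕ) (u v : BV) : ℕ :=
  match u, v with
  | BV.t, BV.a i => i
  | BV.a i, BV.b _ => n + 1 + 5 * (i - 1)
  | BV.a i, BV.a _ => n + 2 + 5 * (i - 1)
  | BV.a i, BV.s => n + 2 + 5 * (i - 1)
  | BV.a i, BV.t => n + 3 + 5 * (i - 1)
  | BV.b i, BV.b _ => n + 4 + 5 * (i - 1)
  | BV.b i, BV.d => n + 4 + 5 * (i - 1)
  | BV.b i, BV.a _ => n + 5 + 5 * (i - 1)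
  | BV.b i, BV.s => n + 5 + 5 * (i - 1)
  | BV.d, BV.s => 6 * n + 1
  | BV.s, BV.s => 6 * n + 2
  | _, _ => 0

/-- One step of Bland's policy iteration with edge numbering `N`:
apply the improving switch with the smallest number. -/
def IsBlandStep (n : ℕ) (N : BV → BV → ℕ) (π π' : BV → BV) : Prop :=
  ∃ u v, BImproving n π u v ∧ (∀ u' v', BImproving n π u' v' → N u v ≤ N u' v') ∧
    π' = Function.update π u v

/-- `BlandReaches n N π ψ` says that Bland's policy iteration started at `π` visits `ψ`. -/
def BlandReaches (n : ℕ) (N : BV → BV → ℕ) : (BV → BV) → (BV → BV) → Prop :=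
  Relation.ReflTransGen (IsBlandStep n N)

/-- The canonical policy `π_0` for `0`: `travel 1`, `skip i` and `leave i` are active. -/
def pi0 (n : ℕ) : BV → BV := fun u =>
  match u with
  | BV.t => BV.a 1
  | BV.a i => aN n (i + 1)
  | BV.b i => aN n (i + 1)
  | BV.d => BV.s
  | BV.s => BV.s

/-- The optimal policy `π_*`: `travel 1`, `enter i` for all `i`, `leave j` for `j < n`,
and `stay n` are active. -/
def piStar (n : ℕ) : BV → BV := fun u =>
  match u with
  | BV.t => BV.a 1
  | BV.a i => BV.b i
  | BV.b i => if i = n then BV.d else BV.a (i + 1)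
  | BV.d => BV.s
  | BV.s => BV.s

/-! ## Bits and canonical policies -/

/-- The least significant set bit `ℓ_1(x)` (1-based). -/
noncomputable def lsb (x : ℕ) : ℕ := sInf {i | 1 ≤ i ∧ Nat.testBit x (i - 1)}

/-- The most significant set bit `m(x)` (1-based). -/
noncomputable def msb1 (x : ℕ) : ℕ := sSup {i | 1 ≤ i ∧ Nat.testBit x (i - 1)}

/-- The least unset bit `ℓ_0(x)` (1-based). -/
noncomputable def lzero (x : ℕ) : ℕ := sInf {i | 1 ≤ i ∧ ¬ Nat.testBit x (i - 1)}

/-- `L_i(x) = max { j ≤ i-2 | x_j = 1 or j = 1 }` (1-based bits). -/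
noncomputable def Lfun (i x : ℕ) : ℕ :=
  sSup {j | 1 ≤ j ∧ j ≤ i - 2 ∧ (Nat.testBit x (j - 1) ∨ j = 1)}

/-- `IsCanonical n x π` says that `π` is the canonical policy `π_x` for `x`. -/
noncomputable def IsCanonical (n x : ℕ) (π : BV → BV) : Prop :=
  IsBPolicy n π ∧
  if x = 0 then
    π BV.t = BV.a 1 ∧
      ∀ i, 1 ≤ i → i ≤ n → π (BV.a i) = aN n (i + 1) ∧ π (BV.b i) = aN n (i + 1)
  else
    π BV.t = BV.a (lsb x) ∧
    π (BV.b (msb1 x)) = aN n (msb1 x + 1) ∧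
    (∀ i, msb1 x < i → i ≤ n → π (BV.a i) = aN n (i + 1) ∧ π (BV.b i) = aN n (i + 1)) ∧
    ∀ i, 1 ≤ i → i ≤ n → Nat.testBit x (i - 1) →
      π (BV.a i) = BV.b i ∧
      (i = 2 → π (BV.b 1) = BV.a 2 ∧ (¬ Nat.testBit x 0 → π (BV.a 1) = BV.a 2)) ∧
      (3 ≤ i → Nat.testBit x (i - 2) → π (BV.b (i - 1)) = BV.a i) ∧
      (3 ≤ i → ¬ Nat.testBit x (i - 2) →
        π (BV.b (i - 1)) = BV.b i ∧ π (BV.a (i - 1)) = BV.a i ∧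
        π (BV.b (i - 2)) = BV.a (i - 1) ∧
        (Lfun i x < i - 2 →
          ∀ j, Lfun i x + 1 ≤ j → j ≤ i - 2 →
            π (BV.a j) = BV.t ∧ π (BV.b (j - 1)) = BV.b j) ∧
        (Lfun i x = 1 → ¬ Nat.testBit x 0 → π (BV.a 1) = BV.t))

/-- Activating a list of edges in a policy, from left to right. -/
def activateList (π : BV → BV) (L : List (BV × BV)) : BV → BV :=
  L.foldl (fun σ e => Function.update σ e.1 e.2) π

/-- The canonical phases w.r.t. an odd number `x` (with `ℓ := ℓ_0(x)`), as a list of edges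
to be activated in order. -/
noncomputable def phaseList (n x : ℕ) : List (BV × BV) :=
  let ℓ := lzero x
  (if Nat.testBit x ℓ then [(BV.b ℓ, aN n (ℓ + 1))] else []) ++
  (if Nat.testBit x ℓ ∨ msb1 x < ℓ then [(BV.b (ℓ - 1), BV.b ℓ)] else []) ++
  [(BV.a ℓ, BV.b ℓ), (BV.t, BV.a ℓ)] ++
  ((List.range (ℓ - 2)).map fun j => (BV.a (j + 1), BV.t)) ++
  [(BV.a (ℓ - 1), BV.a ℓ)] ++
  (((List.range (ℓ - 3)).reverse).map fun j => (BV.b (j + 1), BV.b (j + 2))) ++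
  (if ℓ = 2 then [(BV.b 1, BV.a 2)] else [])

/-! ## The Markov decision process `𝔇_n` -/

/-- Vertices of `𝔇_n`: the original vertices (`base`), and for every edge `(v,w)` of `𝔅_n`
other than the self-loop, the gadget vertices `x v w`, `y v w`, `z v w`. -/
inductive DV : Type where
  | base : BV → DV
  | x : BV → BV → DV
  | y : BV → BV → DV
  | z : BV → BV → DV
deriving DecidableEq

/-- The edges of `𝔅_n` that get replaced by gadgets (all edges except the self-loop `(s,s)`). -/
def DEdgePair (n : ℕ) (v w : BV) : Prop := BEdge n v w ∧ v ≠ BV.s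

/-- The vertex set of `𝔇_n`. -/
def IsDVertex (n : ℕ) : DV → Prop
  | DV.base v => IsBVertex n v
  | DV.x v w => DEdgePair n v w
  | DV.y v w => DEdgePair n v w
  | DV.z v w => DEdgePair n v w

/-- The agent vertices of `𝔇_n` (all vertices except the randomization vertices `y v w`). -/
def IsDAgent (n : ℕ) : DV → Prop
  | DV.base v => IsBVertex n v
  | DV.x v w => DEdgePair n v w
  | DV.y _ _ => False
  | DV.z v w => DEdgePair n v w

/-- The agent edges of `𝔇_n`. -/
def DEdge (n : ℕ) (u u' : DV) : Prop :=
  (∃ v w, DEdgePair n v w ∧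
    ((u = DV.base v ∧ u' = DV.x v w) ∨ (u = DV.x v w ∧ u' = DV.base v) ∨
     (u = DV.x v w ∧ u' = DV.y v w) ∨ (u = DV.z v w ∧ u' = DV.base w))) ∨
  (u = DV.base BV.s ∧ u' = DV.base BV.s)

/-- The reward function of `𝔇_n`: the edge `(z v w, w)` carries the reward of the original
edge `(v,w)`; all other agent edges have reward `0`. -/
def rD (n : ℕ) (u u' : DV) : ℚ :=
  match u, u' with
  | DV.z v w, DV.base w' => if w' = w then rB n v w else 0
  | _, _ => 0

/-- A policy for `𝔇_n` chooses an outgoing agent edge at every agent vertex. -/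
def IsDPolicy (n : ℕ) (π : DV → DV) : Prop := ∀ u, IsDAgent n u → DEdge n u (π u)

/-- `IsDVal n p π V` says that `V` satisfies the Bellman equations characterizing the value
function of the policy `π` for `𝔇_n` with probabilities `p`, with `V s = 0`. -/
def IsDVal (n : ℕ) (p : BV → ℚ) (π : DV → DV) (V : DV → ℚ) : Prop :=
  V (DV.base BV.s) = 0 ∧
  (∀ u, IsDAgent n u → V u = rD n u (π u) + V (π u)) ∧
  (∀ v w, DEdgePair n v w →
    V (DV.y v w) = p v * V (DV.z v w) + (1 - p v) * V (DV.base v))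

open Classical in
/-- The value function of a (weak unichain) policy `π` for `𝔇_n`: the unique solution of the
Bellman equations (normalized to `0` outside the vertex set). -/
noncomputable def DVal (n : ℕ) (p : BV → ℚ) (π : DV → DV) : DV → ℚ :=
  if h : ∃! V : DV → ℚ, IsDVal n p π V ∧ ∀ u, ¬ IsDVertex n u → V u = 0 then
    h.exists.choose
  else fun _ => 0

/-- The reduced costs of an agent edge `(u,u')` of `𝔇_n` w.r.t. the policy `π`. -/
noncomputable def zD (n : ℕ) (p : BV → ℚ) (π : DV → DV) (u u' : DV) : ℚ :=
  rD n u u' + DVal n p π u' - DVal n p π u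

/-- An agent edge of `𝔇_n` is an improving switch if its reduced costs are positive. -/
def DImproving (n : ℕ) (p : BV → ℚ) (π : DV → DV) (u u' : DV) : Prop :=
  DEdge n u u' ∧ 0 < zD n p π u u'

/-- One (agent or positive-probability randomization) step of the process `𝔇_n` under `π`. -/
def DStep (n : ℕ) (p : BV → ℚ) (π : DV → DV) (u u' : DV) : Prop :=
  (IsDAgent n u ∧ u' = π u) ∨
  (∃ v w, DEdgePair n v w ∧ u = DV.y v w ∧
    ((u' = DV.z v w ∧ 0 < p v) ∨ (u' = DV.base v ∧ 0 < 1 - p v)))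

/-- A policy for `𝔇_n` is weak unichain if it reaches `s` with probability one from every
vertex, i.e. `s` is reachable via active/positive-probability steps from every vertex. -/
def DWeakUnichain (n : ℕ) (p : BV → ℚ) (π : DV → DV) : Prop :=
  ∀ u, IsDVertex n u → Relation.ReflTransGen (DStep n p π) u (DV.base BV.s)

/-- The twin policy of a policy `π` for `𝔅_n`: every vertex `v ≠ s` is `π v`-oriented. -/
def twin (π : BV → BV) : DV → DV := fun u =>
  match u with
  | DV.base v => if v = BV.s then DV.base BV.s else DV.x v (π v)
  | DV.x v w => if w = π v then DV.y v w else DV.base v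
  | DV.y v w => DV.y v w
  | DV.z _ w => DV.base w

/-- The vertex numbering `𝒩_V` of `𝔅_n`: the order `(t, a 1, b 1, a 2, b 2, …, a n, b n, d, s)`. -/
def NV (n : ℕ) : BV → ℕ
  | BV.t => 1
  | BV.a i => 2 * i
  | BV.b i => 2 * i + 1
  | BV.d => 2 * n + 2
  | BV.s => 2 * n + 3

/-- The specific probabilities `p_v = 2^{-𝒩_V(v)·(n+5)}`. -/
noncomputable def pSpec (n : ℕ) (v : BV) : ℚ := (2 : ℚ) ^ (-((NV n v * (n + 5) : ℕ) : ℤ))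

/-- The set `B(v)` of agent edges of `𝔇_n` belonging to the vertex `v`. -/
def Belongs (n : ℕ) (v : BV) (e : DV × DV) : Prop :=
  ∃ w, DEdgePair n v w ∧
    (e = (DV.x v w, DV.y v w) ∨ e = (DV.base v, DV.x v w) ∨ e = (DV.x v w, DV.base v))

/-- Applying the improving switch `e` to the policy `π` yields `π'`. -/
def DApply (n : ℕ) (p : BV → ℚ) (π : DV → DV) (e : DV × DV) (π' : DV → DV) : Prop :=
  DImproving n p π e.1 e.2 ∧ π' = Function.update π e.1 e.2

/-- One step of Bland's policy iteration on `𝔇_n` with edge numbering `N`. -/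
def IsBlandStepD (n : ℕ) (p : BV → ℚ) (N : DV → DV → ℕ) (π π' : DV → DV) : Prop :=
  ∃ u u', DImproving n p π u u' ∧ (∀ a b, DImproving n p π a b → N u u' ≤ N a b) ∧
    π' = Function.update π u u'

/-- One step of Dantzig's policy iteration on `𝔇_n`: apply an improving switch of maximal
reduced costs. -/
def DantzigStep (n : ℕ) (p : BV → ℚ) (π π' : DV → DV) : Prop :=
  ∃ u u', DImproving n p π u u' ∧
    (∀ a b, DImproving n p π a b → zD n p π a b ≤ zD n p π u u') ∧
    π' = Function.update π u u'

/-- The finite set of vertices of `𝔅_n`, as a `Finset`. -/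
noncomputable def BVSet (n : ℕ) : Finset BV :=
  {BV.t, BV.d, BV.s} ∪ (Finset.Icc 1 n).image BV.a ∪ (Finset.Icc 1 n).image BV.b

/-- The finite set of agent vertices of `𝔇_n`, as a `Finset`. -/
noncomputable def DAgentSet (n : ℕ) : Finset DV := by
  classical
  exact ((BVSet n).image DV.base) ∪
    (((BVSet n ×ˢ BVSet n).filter fun e => DEdgePair n e.1 e.2).image fun e => DV.x e.1 e.2) ∪
    (((BVSet n ×ˢ BVSet n).filter fun e => DEdgePair n e.1 e.2).image fun e => DV.z e.1 e.2)

/-- The objective of the Largest Increase rule: the sum of the values of all agent vertices. -/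
noncomputable def LIobj (n : ℕ) (p : BV → ℚ) (π : DV → DV) : ℚ :=
  ∑ u ∈ DAgentSet n, DVal n p π u

/-- One step of the Largest Increase policy iteration on `𝔇_n`: apply an improving switch
maximizing the sum of all agent vertex values of the resulting policy. -/
def LIStep (n : ℕ) (p : BV → ℚ) (π π' : DV → DV) : Prop :=
  ∃ u u', DImproving n p π u u' ∧
    (∀ a b, DImproving n p π a b →
      LIobj n p (Function.update π a b) ≤ LIobj n p (Function.update π u u')) ∧
    π' = Function.update π u u'

/-- `N` is a Bland numbering `𝒩_{𝔇_n}` for `𝔇_n`: it is injective on agent edges, the edges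
`(x v w, v)` all come first, within each gadget `(x v w, y v w)` precedes `(v, x v w)`,
the gadget blocks are ordered according to `𝒩_{𝔅_n}`, and the self-loop comes last. -/
def IsDBlandNumbering (n : ℕ) (N : DV → DV → ℕ) : Prop :=
  (∀ u₁ u₂ u₁' u₂', DEdge n u₁ u₂ → DEdge n u₁' u₂' → N u₁ u₂ = N u₁' u₂' →
    u₁ = u₁' ∧ u₂ = u₂') ∧
  (∀ v w v' w', DEdgePair n v w → DEdgePair n v' w' →
    N (DV.x v w) (DV.base v) < N (DV.x v' w') (DV.y v' w')) ∧
  (∀ v w, DEdgePair n v w → N (DV.x v w) (DV.y v w) < N (DV.base v) (DV.x v w)) ∧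
  (∀ v w v' w', DEdgePair n v w → DEdgePair n v' w' → NB n v w < NB n v' w' →
    N (DV.base v) (DV.x v w) < N (DV.x v' w') (DV.y v' w')) ∧
  (∀ v w, DEdgePair n v w → N (DV.base v) (DV.x v w) < N (DV.base BV.s) (DV.base BV.s))

/-!
On `𝔅_n`, the levels whose bonus edge `enter(i)` is active encode a binary counter, and every policy
of the run has a distinguished improving switch: all vertices of smaller number are optimal, and the
switch beats the other improving switches at its vertex both in reduced costs and in Bland number.
Starting from `π_0`, applying this switch again and again counts through all values below `2 ^ n`,
increasing the counter by at most one per switch.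

On `𝔇_n`, the gadgets multiply the reduced costs at `v` by `p_v`, and these probabilities decay so
quickly with `𝒩_V(v)` that an improving switch of small number outweighs all switches of larger
number. Hence, in all three rules, a vertex `v` can be redirected only along the distinguished
switch of the policy simulated on `𝔅_n`. Switches that merely open or close a gadget do not change
the simulated policy, so the run on `𝔇_n` is at least as long as the one on `𝔅_n`.

The largest increase rule first opens a gadget, since redirecting `v` pays only once the gadget is
open, and it then has to redirect `v` at once: this gains at least `1 / 4`, while the gain from any
other gadget is smaller. All other gadgets that are open at inactive edges keep negative reduced
costs, so redirecting a vertex into one of them is never improving.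
-/

/-! ### The graph `𝔅_n` -/

/-- The reduced costs of the edge `(u, w)` with respect to an arbitrary function `V` in place of
the value function. -/
def redCost (n : ℕ) (V : BV → ℚ) (u w : BV) : ℚ := rB n u w + V w - V u

/-- No edge out of `u` has positive reduced costs with respect to `V`. -/
def IsOptimalAt (n : ℕ) (V : BV → ℚ) (u : BV) : Prop := ∀ w, BEdge n u w → redCost n V u w ≤ 0

/-- A potential whose increase along every edge is at least the reward of the edge. It bounds
the reward of every path by its endpoints, so that no cycle has positive reward. -/
def potential (n : ℕ) : BV → ℚ
  | BV.t => 0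
  | BV.a i => 2 ^ i - 2
  | BV.b i => 2 ^ (i + 1) - 2
  | BV.d => 2 ^ (n + 1) - 5 / 4
  | BV.s => 2 ^ (n + 1) - 5 / 4

lemma two_le_two_pow {i : ℕ} (hi : 1 ≤ i) : (2 : ℚ) ≤ 2 ^ i :=
  le_self_pow₀ one_le_two (by omega)

section Graph

variable {n i : ℕ} {u w : BV}

lemma aN_top (n : ℕ) : aN n (n + 1) = BV.s := if_pos rfl

lemma aN_of_le (h : i ≤ n) : aN n i = BV.a i := if_neg (by omega)

lemma bN_of_le (h : i ≤ n) : bN n i = BV.b i := if_neg (by omega)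

lemma rB_travel (n i : ℕ) : rB n BV.t (BV.a i) = 0 := rfl

lemma rB_enter (n i : ℕ) : rB n (BV.a i) (BV.b i) = 2 ^ i := if_pos rfl

lemma rB_skip (n i j : ℕ) : rB n (BV.a i) (aN n j) = 0 := by
  unfold aN; split_ifs <;> rfl

lemma rB_board (n i : ℕ) : rB n (BV.a i) BV.t = -(2 ^ i) + 5 / 4 := rfl

lemma rB_stay (n i : ℕ) : rB n (BV.b i) (bN n (i + 1)) = 3 / 4 := by
  unfold bN
  split_ifs with h
  · simp [rB, show i = n by omega]
  · simp [rB]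

lemma rB_leave (n i j : ℕ) : rB n (BV.b i) (aN n j) = 0 := by
  unfold aN; split_ifs <;> rfl

lemma isBVertex_aN (h : 1 ≤ i) (h' : i ≤ n + 1) : IsBVertex n (aN n i) := by
  unfold aN
  split_ifs with htop
  · trivial
  · exact ⟨h, by omega⟩

lemma isBVertex_bN (h : 1 ≤ i) (h' : i ≤ n + 1) : IsBVertex n (bN n i) := by
  unfold bN
  split_ifs with htop
  · trivial
  · exact ⟨h, by omega⟩

lemma NV_injOn (n : ℕ) : Set.InjOn (NV n) {u | IsBVertex n u} := by
  rintro u hu v hv h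
  cases u <;> cases v <;>
    simp only [NV, IsBVertex, Set.mem_ofPred_eq, BV.a.injEq, BV.b.injEq, reduceCtorEq] at * <;>
    omega

lemma bEdge_t_iff : BEdge n BV.t w ↔ ∃ i, 1 ≤ i ∧ i ≤ n ∧ w = BV.a i := by
  simp [BEdge]

lemma bEdge_a_iff : BEdge n (BV.a i) w ↔
    1 ≤ i ∧ i ≤ n ∧ (w = BV.b i ∨ w = aN n (i + 1) ∨ w = BV.t) := by
  constructor
  · rintro (⟨j, hj, hjn, h, rfl⟩ | ⟨j, hj, hjn, h, rfl⟩ | ⟨j, hj, hjn, h, rfl⟩ |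
      ⟨j, hj, hjn, h, rfl⟩ | ⟨j, hj, hjn, h, rfl⟩ | ⟨j, hj, hjn, h, rfl⟩ | ⟨h, rfl⟩ | ⟨h, rfl⟩) <;>
      cases h <;> simp [*]
  · rintro ⟨hi, hin, rfl | rfl | rfl⟩
    · exact .inr (.inl ⟨i, hi, hin, rfl, rfl⟩)
    · exact .inr (.inr (.inl ⟨i, hi, hin, rfl, rfl⟩))
    · exact .inr (.inr (.inr (.inl ⟨i, hi, hin, rfl, rfl⟩)))

lemma bEdge_b_iff : BEdge n (BV.b i) w ↔
    1 ≤ i ∧ i ≤ n ∧ (w = bN n (i + 1) ∨ w = aN n (i + 1)) := by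
  constructor
  · rintro (⟨j, hj, hjn, h, rfl⟩ | ⟨j, hj, hjn, h, rfl⟩ | ⟨j, hj, hjn, h, rfl⟩ |
      ⟨j, hj, hjn, h, rfl⟩ | ⟨j, hj, hjn, h, rfl⟩ | ⟨j, hj, hjn, h, rfl⟩ | ⟨h, rfl⟩ | ⟨h, rfl⟩) <;>
      cases h <;> simp [*]
  · rintro ⟨hi, hin, rfl | rfl⟩
    · exact .inr (.inr (.inr (.inr (.inl ⟨i, hi, hin, rfl, rfl⟩))))
    · exact .inr (.inr (.inr (.inr (.inr (.inl ⟨i, hi, hin, rfl, rfl⟩)))))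

lemma bEdge_d_iff : BEdge n BV.d w ↔ w = BV.s := by simp [BEdge]

lemma bEdge_s_iff : BEdge n BV.s w ↔ w = BV.s := by simp [BEdge]

lemma BEdge.travel (h : 1 ≤ i) (h' : i ≤ n) : BEdge n BV.t (BV.a i) :=
  bEdge_t_iff.2 ⟨i, h, h', rfl⟩

lemma BEdge.enter (h : 1 ≤ i) (h' : i ≤ n) : BEdge n (BV.a i) (BV.b i) :=
  bEdge_a_iff.2 ⟨h, h', .inl rfl⟩

lemma BEdge.skip (h : 1 ≤ i) (h' : i ≤ n) : BEdge n (BV.a i) (aN n (i + 1)) :=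
  bEdge_a_iff.2 ⟨h, h', .inr (.inl rfl)⟩

lemma BEdge.board (h : 1 ≤ i) (h' : i ≤ n) : BEdge n (BV.a i) BV.t :=
  bEdge_a_iff.2 ⟨h, h', .inr (.inr rfl)⟩

lemma BEdge.stay (h : 1 ≤ i) (h' : i ≤ n) : BEdge n (BV.b i) (bN n (i + 1)) :=
  bEdge_b_iff.2 ⟨h, h', .inl rfl⟩

lemma BEdge.leave (h : 1 ≤ i) (h' : i ≤ n) : BEdge n (BV.b i) (aN n (i + 1)) :=
  bEdge_b_iff.2 ⟨h, h', .inr rfl⟩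

@[elab_as_elim]
lemma BEdge.casesKind {motive : ∀ u w, BEdge n u w → Prop}
    (travel : ∀ i (hi : 1 ≤ i) (hin : i ≤ n), motive BV.t (BV.a i) (.travel hi hin))
    (enter : ∀ i (hi : 1 ≤ i) (hin : i ≤ n), motive (BV.a i) (BV.b i) (.enter hi hin))
    (skip : ∀ i (hi : 1 ≤ i) (hin : i ≤ n), motive (BV.a i) (aN n (i + 1)) (.skip hi hin))
    (board : ∀ i (hi : 1 ≤ i) (hin : i ≤ n), motive (BV.a i) BV.t (.board hi hin))
    (stay : ∀ i (hi : 1 ≤ i) (hin : i ≤ n), motive (BV.b i) (bN n (i + 1)) (.stay hi hin))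
    (leave : ∀ i (hi : 1 ≤ i) (hin : i ≤ n), motive (BV.b i) (aN n (i + 1)) (.leave hi hin))
    (dummy : motive BV.d BV.s (bEdge_d_iff.2 rfl)) (sink : motive BV.s BV.s (bEdge_s_iff.2 rfl))
    (h : BEdge n u w) : motive u w h := by
  rcases h with ⟨i, hi, hin, rfl, rfl⟩ | ⟨i, hi, hin, rfl, rfl⟩ | ⟨i, hi, hin, rfl, rfl⟩ |
    ⟨i, hi, hin, rfl, rfl⟩ | ⟨i, hi, hin, rfl, rfl⟩ | ⟨i, hi, hin, rfl, rfl⟩ | ⟨rfl, rfl⟩ |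
    ⟨rfl, rfl⟩
  exacts [travel i hi hin, enter i hi hin, skip i hi hin, board i hi hin, stay i hi hin,
    leave i hi hin, dummy, sink]

lemma BEdge.isBVertex_left (h : BEdge n u w) : IsBVertex n u := by
  induction h using BEdge.casesKind with
  | travel => trivial
  | enter i hi hin => exact ⟨hi, hin⟩
  | skip i hi hin => exact ⟨hi, hin⟩
  | board i hi hin => exact ⟨hi, hin⟩
  | stay i hi hin => exact ⟨hi, hin⟩
  | leave i hi hin => exact ⟨hi, hin⟩
  | dummy => trivial
  | sink => trivial

lemma BEdge.isBVertex_right (h : BEdge n u w) : IsBVertex n w := by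
  induction h using BEdge.casesKind with
  | travel i hi hin => exact ⟨hi, hin⟩
  | enter i hi hin => exact ⟨hi, hin⟩
  | skip i hi hin => exact isBVertex_aN (by omega) (by omega)
  | board => trivial
  | stay i hi hin => exact isBVertex_bN (by omega) (by omega)
  | leave i hi hin => exact isBVertex_aN (by omega) (by omega)
  | dummy => trivial
  | sink => trivial

lemma le_potential_aN (h : i ≤ n + 1) : (2 : ℚ) ^ i - 2 ≤ potential n (aN n i) := by
  unfold aN
  split_ifs with htop
  · subst htop; simp only [potential]; linarith
  · exact le_rfl

lemma le_potential_bN (h : i ≤ n) :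
    (2 : ℚ) ^ (i + 1) - 5 / 4 ≤ potential n (bN n (i + 1)) := by
  unfold bN
  split_ifs with htop
  · obtain rfl : i = n := by omega
    exact le_rfl
  · have : (2 : ℚ) ≤ 2 ^ (i + 1) := two_le_two_pow (by omega)
    simp only [potential, pow_succ _ (i + 1)]
    linarith

lemma potential_nonneg (hu : IsBVertex n u) : 0 ≤ potential n u := by
  cases u with
  | t => exact le_rfl
  | s => simp only [potential]; linarith [two_le_two_pow (show 1 ≤ n + 1 by omega)]
  | d => simp only [potential]; linarith [two_le_two_pow (show 1 ≤ n + 1 by omega)]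
  | a i => exact sub_nonneg.2 (two_le_two_pow hu.1)
  | b i => exact sub_nonneg.2 (two_le_two_pow (by omega))

lemma rB_le_potential_sub (h : BEdge n u w) : rB n u w ≤ potential n w - potential n u := by
  induction h using BEdge.casesKind with
  | travel i hi => simp only [rB_travel, potential]; linarith [two_le_two_pow hi]
  | enter i => simp only [rB_enter, potential, pow_succ]; linarith
  | skip i hi hin =>
    have := le_potential_aN (show i + 1 ≤ n + 1 by omega)
    rw [pow_succ] at this
    rw [rB_skip, show potential n (BV.a i) = 2 ^ i - 2 from rfl]
    linarith [two_le_two_pow hi]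
  | board i => simp only [rB_board, potential]; linarith
  | stay i _ hin =>
    have := le_potential_bN hin
    rw [rB_stay, show potential n (BV.b i) = 2 ^ (i + 1) - 2 from rfl]
    linarith
  | leave i _ hin =>
    have := le_potential_aN (show i + 1 ≤ n + 1 by omega)
    rw [rB_leave, show potential n (BV.b i) = 2 ^ (i + 1) - 2 from rfl]
    linarith
  | dummy => simp [rB, potential]
  | sink => simp [rB]

lemma abs_rB_le (h : BEdge n u w) : |rB n u w| ≤ 2 ^ (n + 1) := by
  have hn : (2 : ℚ) ≤ 2 ^ (n + 1) := two_le_two_pow (by omega)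
  have hmono : ∀ i ≤ n, (2 : ℚ) ^ i ≤ 2 ^ (n + 1) := fun i hi =>
    pow_le_pow_right₀ one_le_two (by omega)
  induction h using BEdge.casesKind with
  | travel => simp [rB_travel]
  | enter i hi hin => simpa [rB_enter] using hmono i hin
  | skip => simp [rB_skip]
  | board i hi hin =>
    rw [rB_board, abs_le]
    constructor <;> linarith [two_le_two_pow hi, hmono i hin]
  | stay => rw [rB_stay, abs_le]; constructor <;> linarith
  | leave => simp [rB_leave]
  | dummy => simp [rB]
  | sink => simp [rB]

lemma exists_int_rB (n : ℕ) (u w : BV) : ∃ m : ℤ, rB n u w = m / 4 := by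
  unfold rB
  split
  · split_ifs
    · rename_i i _ _; exact ⟨4 * 2 ^ i, by push_cast; ring⟩
    · exact ⟨0, by simp⟩
  · rename_i i; exact ⟨-(4 * 2 ^ i) + 5, by push_cast; ring⟩
  · split_ifs
    · exact ⟨3, by norm_num⟩
    · exact ⟨0, by simp⟩
  · split_ifs
    · exact ⟨3, by norm_num⟩
    · exact ⟨0, by simp⟩
  · exact ⟨0, by simp⟩

end Graph

lemma ne_sink_of_redCost_pos {n : ℕ} {V : BV → ℚ} {v w : BV} (h : BEdge n v w)
    (hpos : 0 < redCost n V v w) : v ≠ BV.s := by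
  rintro rfl
  obtain rfl := bEdge_s_iff.1 h
  simp [redCost, rB] at hpos

/-! ### Policies with nonnegative values -/

/-- The path that `σ` takes from `u` visits `v`. -/
def Visits (σ : BV → BV) (v u : BV) : Prop := ∃ k : ℕ, σ^[k] u = v

section Visits

variable {n : ℕ} {σ : BV → BV} {u v w : BV}

lemma Visits.refl (σ : BV → BV) (v : BV) : Visits σ v v := ⟨0, rfl⟩

lemma visits_iff_of_ne (h : u ≠ v) : Visits σ v u ↔ Visits σ v (σ u) := by
  constructor
  · rintro ⟨_ | k, hk⟩
    · exact absurd hk h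
    · exact ⟨k, hk⟩
  · rintro ⟨k, hk⟩
    exact ⟨k + 1, hk⟩

lemma Visits.eq_sink (hs : σ BV.s = BV.s) (h : Visits σ v BV.s) : v = BV.s := by
  obtain ⟨k, rfl⟩ := h
  exact Function.iterate_fixed hs k

lemma Visits.update (h : Visits σ v u) (hw : ¬ Visits σ w u) (x : BV) :
    Visits (Function.update σ w x) v u := by
  obtain ⟨k, rfl⟩ := h
  refine ⟨k, ?_⟩
  induction k generalizing u with
  | zero => rfl
  | succ k ih =>
    have huw : u ≠ w := by rintro rfl; exact hw (.refl _ _)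
    rw [Function.iterate_succ_apply, Function.update_of_ne huw,
      ih fun h => hw ((visits_iff_of_ne huw).2 h), Function.iterate_succ_apply]

lemma BWeakUnichain.induction (h : BWeakUnichain n σ) (hσ : IsBPolicy n σ) {P : BV → Prop}
    (sink : P BV.s) (step : ∀ u, IsBVertex n u → P (σ u) → P u) (hu : IsBVertex n u) : P u := by
  obtain ⟨k, hk⟩ := h u hu
  induction k generalizing u with
  | zero => obtain rfl : u = BV.s := hk; exact sink
  | succ k ih => exact step u hu (ih (hσ u hu).isBVertex_right hk)

end Visits

/-- `σ` is a weak unichain policy for `𝔅_n` and `V` is its value function, given by the Bellman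
equations; all values are nonnegative. -/
structure IsValue (n : ℕ) (σ : BV → BV) (V : BV → ℚ) : Prop where
  isPolicy : IsBPolicy n σ
  isWeakUnichain : BWeakUnichain n σ
  sink : V BV.s = 0
  bellman : ∀ u, IsBVertex n u → V u = rB n u (σ u) + V (σ u)
  nonneg : ∀ u, IsBVertex n u → 0 ≤ V u

open Classical in
/-- The value function that results from applying the switch `(v, w)` to a policy `σ` with value
function `V`. -/
noncomputable def switchValue (n : ℕ) (σ : BV → BV) (V : BV → ℚ) (v w u : BV) : ℚ :=
  if Visits σ v u then V u + redCost n V v w else V u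

lemma switchValue_of_visits {n : ℕ} {σ : BV → BV} {V : BV → ℚ} {u v : BV} (w : BV)
    (h : Visits σ v u) : switchValue n σ V v w u = V u + redCost n V v w := if_pos h

lemma switchValue_of_not_visits {n : ℕ} {σ : BV → BV} {V : BV → ℚ} {u v : BV} (w : BV)
    (h : ¬ Visits σ v u) : switchValue n σ V v w u = V u := if_neg h

namespace IsValue

variable {n : ℕ} {σ : BV → BV} {V : BV → ℚ} {u v w : BV}

lemma policy_sink (B : IsValue n σ V) : σ BV.s = BV.s := bEdge_s_iff.1 (B.isPolicy BV.s trivial)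

lemma policy_dummy (B : IsValue n σ V) : σ BV.d = BV.s := bEdge_d_iff.1 (B.isPolicy BV.d trivial)

lemma dummy (B : IsValue n σ V) : V BV.d = 0 := by
  rw [B.bellman BV.d trivial, B.policy_dummy, B.sink]
  simp [rB]

lemma isBVertex_policy (B : IsValue n σ V) (hu : IsBVertex n u) : IsBVertex n (σ u) :=
  (B.isPolicy u hu).isBVertex_right

lemma redCost_policy (B : IsValue n σ V) (hu : IsBVertex n u) : redCost n V u (σ u) = 0 := by
  rw [redCost, ← B.bellman u hu, sub_self]

lemma exists_int (B : IsValue n σ V) (hu : IsBVertex n u) : ∃ m : ℤ, V u = m / 4 := by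
  refine B.isWeakUnichain.induction B.isPolicy (P := fun u => ∃ m : ℤ, V u = m / 4)
    ⟨0, by simp [B.sink]⟩ ?_ hu
  rintro u hu ⟨m, hm⟩
  obtain ⟨k, hk⟩ := exists_int_rB n u (σ u)
  exact ⟨k + m, by rw [B.bellman u hu, hm, hk]; push_cast; ring⟩

lemma quarter_le_abs_redCost (B : IsValue n σ V) (h : BEdge n u w) (hne : redCost n V u w ≠ 0) :
    1 / 4 ≤ |redCost n V u w| := by
  obtain ⟨a, ha⟩ := exists_int_rB n u w
  obtain ⟨b, hb⟩ := B.exists_int h.isBVertex_right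
  obtain ⟨c, hc⟩ := B.exists_int h.isBVertex_left
  have hz : redCost n V u w = ((a + b - c : ℤ) : ℚ) / 4 := by
    rw [redCost, ha, hb, hc]; push_cast; ring
  have hm : (1 : ℚ) ≤ |((a + b - c : ℤ) : ℚ)| := by
    exact_mod_cast Int.one_le_abs (fun h0 => hne (by rw [hz, h0]; simp))
  rw [hz, abs_div, abs_of_pos (show (0 : ℚ) < 4 by norm_num)]
  linarith

lemma le_of_visits (B : IsValue n σ V) (hu : IsBVertex n u) (h : Visits σ v u) :
    V u ≤ potential n v - potential n u + V v := by
  obtain ⟨k, hk⟩ := h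
  induction k generalizing u with
  | zero => rw [← hk]; simp
  | succ k ih =>
    have hstep := rB_le_potential_sub (B.isPolicy u hu)
    have hrest := ih (B.isBVertex_policy hu) hk
    rw [B.bellman u hu]
    linarith

lemma le_potential_sub (B : IsValue n σ V) (hu : IsBVertex n u) :
    V u ≤ potential n BV.s - potential n u := by
  simpa [B.sink] using B.le_of_visits hu (B.isWeakUnichain u hu)

lemma le_two_pow (B : IsValue n σ V) (hu : IsBVertex n u) : V u ≤ 2 ^ (n + 1) := by
  have hs : potential n BV.s = 2 ^ (n + 1) - 5 / 4 := rfl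
  linarith [B.le_potential_sub hu, potential_nonneg hu]

lemma abs_redCost_le (B : IsValue n σ V) (h : BEdge n u w) : |redCost n V u w| ≤ 2 ^ (n + 2) := by
  obtain ⟨hlo, hhi⟩ := abs_le.1 (abs_rB_le h)
  have hu := B.le_two_pow h.isBVertex_left
  have hw := B.le_two_pow h.isBVertex_right
  have hu0 := B.nonneg _ h.isBVertex_left
  have hw0 := B.nonneg _ h.isBVertex_right
  rw [redCost, abs_le, pow_succ _ (n + 1)]
  constructor <;> linarith

lemma not_visits_policy_self (B : IsValue n σ V) (hv : IsBVertex n v) (hvs : v ≠ BV.s) :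
    ¬ Visits σ v (σ v) := by
  rintro ⟨k, hk⟩
  obtain ⟨m, hm⟩ := B.isWeakUnichain v hv
  have hper : Function.IsPeriodicPt σ ((k + 1) * m) v :=
    (show Function.IsPeriodicPt σ (k + 1) v from hk).mul_const m
  refine hvs (hper.symm.trans ?_)
  rw [show (k + 1) * m = k * m + m by ring, Function.iterate_add_apply, hm]
  exact Function.iterate_fixed B.policy_sink _

lemma not_visits_of_redCost_pos (B : IsValue n σ V) (h : BEdge n v w)
    (hpos : 0 < redCost n V v w) : ¬ Visits σ v w := by
  intro hvis
  have hw := B.le_of_visits h.isBVertex_right hvis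
  have hr := rB_le_potential_sub h
  unfold redCost at hpos
  linarith

lemma isWeakUnichain_update (B : IsValue n σ V) (h : BEdge n v w)
    (hpos : 0 < redCost n V v w) : BWeakUnichain n (Function.update σ v w) := by
  have hv : Visits (Function.update σ v w) BV.s v := by
    have hw := Visits.update (B.isWeakUnichain w h.isBVertex_right)
      (B.not_visits_of_redCost_pos h hpos) w
    rw [visits_iff_of_ne (ne_sink_of_redCost_pos h hpos), Function.update_self]
    exact hw
  intro u hu
  refine B.isWeakUnichain.induction B.isPolicy (P := Visits (Function.update σ v w) BV.s)
    (.refl _ _) (fun u _ ih => ?_) hu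
  rcases eq_or_ne u v with rfl | huv
  · exact hv
  · obtain ⟨k, hk⟩ := ih
    exact ⟨k + 1, by rwa [Function.iterate_succ_apply, Function.update_of_ne huv]⟩

lemma update (B : IsValue n σ V) (h : BEdge n v w) (hpos : 0 < redCost n V v w) :
    IsValue n (Function.update σ v w) (switchValue n σ V v w) where
  isPolicy u hu := by
    rcases eq_or_ne u v with rfl | huv
    · rwa [Function.update_self]
    · rw [Function.update_of_ne huv]; exact B.isPolicy u hu
  isWeakUnichain := B.isWeakUnichain_update h hpos
  sink := by
    rw [switchValue_of_not_visits w fun hs =>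
      ne_sink_of_redCost_pos h hpos (hs.eq_sink B.policy_sink), B.sink]
  bellman u hu := by
    rcases eq_or_ne u v with rfl | huv
    · rw [switchValue_of_visits w (.refl _ _), Function.update_self,
        switchValue_of_not_visits w (B.not_visits_of_redCost_pos h hpos), redCost]
      ring
    · rw [Function.update_of_ne huv]
      by_cases hvis : Visits σ v u
      · rw [switchValue_of_visits w hvis, switchValue_of_visits w ((visits_iff_of_ne huv).1 hvis),
          B.bellman u hu, add_assoc]
      · rw [switchValue_of_not_visits w hvis, B.bellman u hu,
          switchValue_of_not_visits w fun hσ => hvis ((visits_iff_of_ne huv).2 hσ)]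
  nonneg u hu := by
    have := B.nonneg u hu
    unfold switchValue
    split_ifs <;> linarith

end IsValue

/-! ### Levels of `𝔅_n` -/

/-- The value of `a_i`, with `a_{n+1} = s`. -/
def valA (n : ℕ) (V : BV → ℚ) (i : ℕ) : ℚ := V (aN n i)

/-- The value of `b_i`, with `b_{n+1} = d`. -/
def valB (n : ℕ) (V : BV → ℚ) (i : ℕ) : ℚ := V (bN n i)

/-- The edge `enter(i)` is active. -/
abbrev Enters (σ : BV → BV) (i : ℕ) : Prop := σ (BV.a i) = BV.b i

/-- The edge `skip(i)` is active. -/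
abbrev Skips (n : ℕ) (σ : BV → BV) (i : ℕ) : Prop := σ (BV.a i) = aN n (i + 1)

/-- The edge `board(i)` is active. -/
abbrev Boards (σ : BV → BV) (i : ℕ) : Prop := σ (BV.a i) = BV.t

/-- The edge `stay(i)` is active. -/
abbrev Stays (n : ℕ) (σ : BV → BV) (i : ℕ) : Prop := σ (BV.b i) = bN n (i + 1)

/-- The edge `leave(i)` is active. -/
abbrev Leaves (n : ℕ) (σ : BV → BV) (i : ℕ) : Prop := σ (BV.b i) = aN n (i + 1)

section Levels

variable {n : ℕ} {σ : BV → BV} {V : BV → ℚ} {i : ℕ}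

lemma b_ne_aN (n i j : ℕ) : BV.b i ≠ aN n j := by unfold aN; split_ifs <;> simp

lemma t_ne_aN (n j : ℕ) : BV.t ≠ aN n j := by unfold aN; split_ifs <;> simp

lemma Enters.not_boards (h : Enters σ i) : ¬ Boards σ i := by simp [Boards, h]

lemma Skips.not_boards (h : Skips n σ i) : ¬ Boards σ i := by
  rw [Boards, h]; exact (t_ne_aN n _).symm

lemma Skips.not_enters (h : Skips n σ i) : ¬ Enters σ i := by
  rw [Enters, h]; exact (b_ne_aN n _ _).symm

lemma Boards.not_enters (h : Boards σ i) : ¬ Enters σ i := fun hE => hE.not_boards h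

namespace IsValue

lemma valA_of_enters (B : IsValue n σ V) (hi : 1 ≤ i) (hin : i ≤ n) (h : Enters σ i) :
    valA n V i = 2 ^ i + valB n V i := by
  rw [valA, valB, aN_of_le hin, bN_of_le hin, B.bellman (BV.a i) ⟨hi, hin⟩, h, rB_enter]

lemma valA_of_skips (B : IsValue n σ V) (hi : 1 ≤ i) (hin : i ≤ n) (h : Skips n σ i) :
    valA n V i = valA n V (i + 1) := by
  rw [valA, valA, aN_of_le hin, B.bellman (BV.a i) ⟨hi, hin⟩, h, rB_skip, zero_add]

lemma valA_of_boards (B : IsValue n σ V) (hi : 1 ≤ i) (hin : i ≤ n) (h : Boards σ i) :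
    valA n V i = V BV.t - 2 ^ i + 5 / 4 := by
  rw [valA, aN_of_le hin, B.bellman (BV.a i) ⟨hi, hin⟩, h, rB_board]
  ring

lemma valB_of_stays (B : IsValue n σ V) (hi : 1 ≤ i) (hin : i ≤ n) (h : Stays n σ i) :
    valB n V i = valB n V (i + 1) + 3 / 4 := by
  rw [valB, valB, bN_of_le hin, B.bellman (BV.b i) ⟨hi, hin⟩, h, rB_stay, add_comm]

lemma valB_of_leaves (B : IsValue n σ V) (hi : 1 ≤ i) (hin : i ≤ n) (h : Leaves n σ i) :
    valB n V i = valA n V (i + 1) := by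
  rw [valA, valB, bN_of_le hin, B.bellman (BV.b i) ⟨hi, hin⟩, h, rB_leave, zero_add]

lemma travel (B : IsValue n σ V) (hin : i ≤ n) (h : σ BV.t = BV.a i) :
    V BV.t = valA n V i := by
  rw [valA, aN_of_le hin, B.bellman BV.t trivial, h, rB_travel, zero_add]

lemma valA_top (B : IsValue n σ V) : valA n V (n + 1) = 0 := by rw [valA, aN_top, B.sink]

lemma valA_nonneg (B : IsValue n σ V) (hi : 1 ≤ i) (hin : i ≤ n + 1) : 0 ≤ valA n V i :=
  B.nonneg _ (isBVertex_aN hi hin)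

end IsValue

lemma redCost_travel (hin : i ≤ n) : redCost n V BV.t (BV.a i) = valA n V i - V BV.t := by
  rw [redCost, valA, rB_travel, aN_of_le hin, zero_add]

lemma redCost_enter (hin : i ≤ n) :
    redCost n V (BV.a i) (BV.b i) = 2 ^ i + valB n V i - valA n V i := by
  rw [redCost, valA, valB, rB_enter, aN_of_le hin, bN_of_le hin]

lemma redCost_skip (hin : i ≤ n) :
    redCost n V (BV.a i) (aN n (i + 1)) = valA n V (i + 1) - valA n V i := by
  rw [redCost, valA, valA, rB_skip, aN_of_le hin, zero_add]

lemma redCost_board (hin : i ≤ n) :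
    redCost n V (BV.a i) BV.t = V BV.t - 2 ^ i + 5 / 4 - valA n V i := by
  rw [redCost, valA, rB_board, aN_of_le hin]
  ring

lemma redCost_stay (hin : i ≤ n) :
    redCost n V (BV.b i) (bN n (i + 1)) = valB n V (i + 1) + 3 / 4 - valB n V i := by
  rw [redCost, valB, valB, rB_stay, bN_of_le hin, add_comm (3 / 4 : ℚ)]

lemma redCost_leave (hin : i ≤ n) :
    redCost n V (BV.b i) (aN n (i + 1)) = valA n V (i + 1) - valB n V i := by
  rw [redCost, valA, valB, rB_leave, bN_of_le hin, zero_add]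

lemma isOptimalAt_t (h : ∀ k, 1 ≤ k → k ≤ n → valA n V k ≤ V BV.t) : IsOptimalAt n V BV.t := by
  intro w hw
  obtain ⟨i, hi, hin, rfl⟩ := bEdge_t_iff.1 hw
  rw [redCost_travel hin]
  linarith [h i hi hin]

lemma isOptimalAt_a (enter : 2 ^ i + valB n V i ≤ valA n V i)
    (skip : valA n V (i + 1) ≤ valA n V i) (board : V BV.t - 2 ^ i + 5 / 4 ≤ valA n V i) :
    IsOptimalAt n V (BV.a i) := by
  intro w hw
  obtain ⟨-, hin, rfl | rfl | rfl⟩ := bEdge_a_iff.1 hw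
  · rw [redCost_enter hin]; linarith
  · rw [redCost_skip hin]; linarith
  · rw [redCost_board hin]; linarith

lemma isOptimalAt_b (stay : valB n V (i + 1) + 3 / 4 ≤ valB n V i)
    (leave : valA n V (i + 1) ≤ valB n V i) : IsOptimalAt n V (BV.b i) := by
  intro w hw
  obtain ⟨-, hin, rfl | rfl⟩ := bEdge_b_iff.1 hw
  · rw [redCost_stay hin]; linarith
  · rw [redCost_leave hin]; linarith

lemma not_NV_lt_NV_t {u : BV} (hu : IsBVertex n u) : ¬ NV n u < NV n BV.t := by
  cases u <;> simp only [NV, IsBVertex] at hu ⊢ <;> omega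

lemma isOptimalAt_of_NV_lt_a (hin : i ≤ n) (ht : IsOptimalAt n V BV.t)
    (h : ∀ k, 1 ≤ k → k < i → IsOptimalAt n V (BV.a k) ∧ IsOptimalAt n V (BV.b k)) :
    ∀ u, IsBVertex n u → NV n u < NV n (BV.a i) → IsOptimalAt n V u := by
  intro u hu hlt
  cases u with
  | t => exact ht
  | s => simp only [NV] at hlt; omega
  | d => simp only [NV] at hlt; omega
  | a k => simp only [NV] at hlt; exact (h k hu.1 (by omega)).1
  | b k => simp only [NV] at hlt; exact (h k hu.1 (by omega)).2

lemma isOptimalAt_of_NV_lt_b (hin : i ≤ n) (ht : IsOptimalAt n V BV.t)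
    (ha : IsOptimalAt n V (BV.a i))
    (h : ∀ k, 1 ≤ k → k < i → IsOptimalAt n V (BV.a k) ∧ IsOptimalAt n V (BV.b k)) :
    ∀ u, IsBVertex n u → NV n u < NV n (BV.b i) → IsOptimalAt n V u := by
  intro u hu hlt
  rcases eq_or_ne u (BV.a i) with rfl | hne
  · exact ha
  · refine isOptimalAt_of_NV_lt_a hin ht h u hu ?_
    cases u <;> simp only [NV, ne_eq, BV.a.injEq] at hlt hne ⊢ <;> omega

end Levels

/-! ### Coherent levels -/

/-- The choice at `b_i` fits the choice at `a_{i+1}`: `b_i` stays if `a_{i+1}` boards and leaves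
otherwise. -/
def ExitCoherent (n : ℕ) (σ : BV → BV) (i : ℕ) : Prop :=
  (i < n ∧ Boards σ (i + 1) ∧ Stays n σ i) ∨
  ((i = n ∨ Enters σ (i + 1) ∨ Skips n σ (i + 1)) ∧ Leaves n σ i)

/-- The choices at `a_i` and `b_i` fit the choice at `a_{i+1}` in the way they do in a canonical
policy, which is recorded by these conditions as far as the run depends on it. -/
def LevelCoherent (n : ℕ) (σ : BV → BV) (i : ℕ) : Prop :=
  (Enters σ i ∧ ExitCoherent n σ i) ∨
  (Skips n σ i ∧ ((i < n ∧ Enters σ (i + 1) ∧ Stays n σ i) ∨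
    (Leaves n σ i ∧ (i = n ∨ Skips n σ (i + 1))))) ∨
  (Boards σ i ∧ i < n ∧ ((Boards σ (i + 1) ∧ Stays n σ i) ∨ (Skips n σ (i + 1) ∧ Leaves n σ i)))

section Coherent

variable {n : ℕ} {σ σ' : BV → BV} {V : BV → ℚ} {i j q : ℕ}

lemma ExitCoherent.congr (h : ExitCoherent n σ i) (ha : σ' (BV.a (i + 1)) = σ (BV.a (i + 1)))
    (hb : σ' (BV.b i) = σ (BV.b i)) : ExitCoherent n σ' i := by
  unfold ExitCoherent Boards Enters Skips Stays Leaves at *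
  rwa [ha, hb]

lemma LevelCoherent.congr (h : LevelCoherent n σ i) (ha : σ' (BV.a i) = σ (BV.a i))
    (ha' : σ' (BV.a (i + 1)) = σ (BV.a (i + 1))) (hb : σ' (BV.b i) = σ (BV.b i)) :
    LevelCoherent n σ' i := by
  unfold LevelCoherent ExitCoherent Boards Enters Skips Stays Leaves at *
  rwa [ha, ha', hb]

lemma ExitCoherent.leaves (h : ExitCoherent n σ i) (hB : ¬ Boards σ (i + 1)) : Leaves n σ i := by
  rcases h with h | h
  · exact absurd h.2.1 hB
  · exact h.2

lemma LevelCoherent.exitCoherent_of_enters (h : LevelCoherent n σ i) (hE : Enters σ i) :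
    ExitCoherent n σ i := by
  rcases h with h | h | h
  · exact h.2
  · exact absurd hE h.1.not_enters
  · exact absurd hE h.1.not_enters

lemma LevelCoherent.exitCoherent_of_boards (h : LevelCoherent n σ i) (hB : Boards σ i) :
    ExitCoherent n σ i := by
  rcases h with h | h | ⟨-, hin, h | h⟩
  · exact h.2
  · exact absurd hB h.1.not_boards
  · exact .inl ⟨hin, h⟩
  · exact .inr ⟨.inr (.inr h.1), h.2⟩

lemma LevelCoherent.skips_and_not_boards_succ (h : LevelCoherent n σ i) (hE : ¬ Enters σ i)
    (hB : ¬ Boards σ i) (hin : i < n) : Skips n σ i ∧ ¬ Boards σ (i + 1) := by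
  rcases h with h | ⟨hS, h | h⟩ | h
  · exact absurd h.1 hE
  · exact ⟨hS, h.2.1.not_boards⟩
  · exact ⟨hS, (h.2.resolve_left hin.ne).not_boards⟩
  · exact absurd h.1 hB

lemma IsValue.valA_le_of_coherent (B : IsValue n σ V) (hin : i ≤ n) (hi : 1 ≤ i)
    (hcoh : ∀ k, i < k → k ≤ n → LevelCoherent n σ k) :
    (LevelCoherent n σ i → ¬ Boards σ i →
      ∀ j, i ≤ j → j ≤ n → ¬ Boards σ j → valA n V j ≤ valA n V i) ∧
    (ExitCoherent n σ i → ∀ j, i < j → j ≤ n → ¬ Boards σ j → valA n V j ≤ valB n V i) := by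
  induction hin using Nat.decreasingInduction with
  | self => exact ⟨fun _ _ j hj hjn _ => by rw [le_antisymm hjn hj], fun _ j hj hjn => by omega⟩
  | of_succ i hin ih =>
    obtain ⟨ihA, ihB⟩ := ih (by omega) fun k hk => hcoh k (by omega)
    have hsucc := hcoh (i + 1) (by omega) hin
    have exit : ExitCoherent n σ i →
        ∀ j, i < j → j ≤ n → ¬ Boards σ j → valA n V j ≤ valB n V i := by
      intro hexit j hj hjn hBj
      by_cases hB : Boards σ (i + 1)
      · have hstay : Stays n σ i := by
          obtain ⟨-, -, hS⟩ | ⟨rfl | hE | hS, -⟩ := hexit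
          exacts [hS, absurd rfl hin.ne, absurd hB hE.not_boards, absurd hB hS.not_boards]
        have hne : j ≠ i + 1 := by rintro rfl; exact hBj hB
        rw [B.valB_of_stays hi hin.le hstay]
        linarith [ihB (hsucc.exitCoherent_of_boards hB) j (by omega) hjn hBj]
      · rw [B.valB_of_leaves hi hin.le (hexit.leaves hB)]
        exact ihA hsucc hB j hj hjn hBj
    refine ⟨fun hlevel hB j hj hjn hBj => ?_, exit⟩
    rcases hj.eq_or_lt with rfl | hlt
    · exact le_rfl
    by_cases hE : Enters σ i
    · rw [B.valA_of_enters hi hin.le hE]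
      have : (0 : ℚ) < 2 ^ i := by positivity
      linarith [exit (hlevel.exitCoherent_of_enters hE) j hlt hjn hBj]
    · obtain ⟨hS, hB'⟩ := hlevel.skips_and_not_boards_succ hE hB hin
      rw [B.valA_of_skips hi hin.le hS]
      exact ihA hsucc hB' j hlt hjn hBj

lemma IsValue.valA_le_valB_or_eq (B : IsValue n σ V) (hi : 1 ≤ i)
    (hcoh : ∀ k, i < k → k ≤ n → LevelCoherent n σ k) (hexit : ExitCoherent n σ i)
    (hij : i < j) (hj : j ≤ n) :
    valA n V j ≤ valB n V i ∨ valA n V j = V BV.t - 2 ^ j + 5 / 4 := by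
  by_cases hB : Boards σ j
  · exact .inr (B.valA_of_boards (by omega) hj hB)
  · exact .inl ((B.valA_le_of_coherent (by omega) hi hcoh).2 hexit j hij hj hB)

lemma IsValue.valA_le_valA_or_eq (B : IsValue n σ V) (hi : 1 ≤ i)
    (hcoh : ∀ k, i ≤ k → k ≤ n → LevelCoherent n σ k) (hB : ¬ Boards σ i)
    (hij : i ≤ j) (hj : j ≤ n) :
    valA n V j ≤ valA n V i ∨ valA n V j = V BV.t - 2 ^ j + 5 / 4 := by
  by_cases hBj : Boards σ j
  · exact .inr (B.valA_of_boards (by omega) hj hBj)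
  · exact .inl ((B.valA_le_of_coherent (hij.trans hj) hi fun k hk => hcoh k hk.le).1
      (hcoh i le_rfl (hij.trans hj)) hB j hij hj hBj)

lemma IsValue.valA_of_entered_block (B : IsValue n σ V) (hq : q ≤ n) (hiq : i ≤ q) (hi : 1 ≤ i)
    (hE : ∀ k, i ≤ k → k ≤ q → Enters σ k) (hL : ∀ k, i ≤ k → k < q → Leaves n σ k) :
    valA n V i = 2 * 2 ^ q - 2 ^ i + valB n V q := by
  induction hiq using Nat.decreasingInduction with
  | self => rw [B.valA_of_enters hi hq (hE q le_rfl le_rfl)]; ring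
  | of_succ i hiq ih =>
    rw [B.valA_of_enters hi (by omega) (hE i le_rfl hiq.le),
      B.valB_of_leaves hi (by omega) (hL i le_rfl hiq),
      ih (by omega) (fun k hk => hE k (by omega)) (fun k hk => hL k (by omega)), pow_succ]
    ring

end Coherent

/-! ### The binary counter -/

/-- The number whose binary digits are the entered levels above level `m`. -/
noncomputable def counter (n : ℕ) (σ : BV → BV) (m : ℕ) : ℕ :=
  ∑ i ∈ Finset.Ico m n, if Enters σ (i + 1) then 2 ^ i else 0

section Counter

variable {n m m' : ℕ} {σ σ' : BV → BV}

lemma counter_congr (h : ∀ i, m < i → σ' (BV.a i) = σ (BV.a i)) :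
    counter n σ' m = counter n σ m := by
  refine Finset.sum_congr rfl fun i hi => ?_
  simp only [Enters, h (i + 1) (Nat.lt_succ_of_le (Finset.mem_Ico.1 hi).1)]

lemma counter_eq_add (h : m < n) :
    counter n σ m = (if Enters σ (m + 1) then 2 ^ m else 0) + counter n σ (m + 1) :=
  Finset.sum_eq_sum_Ico_succ_bot h _

lemma counter_zero_add_one (hm : m ≤ n) (h : ∀ k, 1 ≤ k → k ≤ m → Enters σ k) :
    counter n σ 0 + 1 = 2 ^ m + counter n σ m := by
  induction m with
  | zero => rw [add_comm, pow_zero]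
  | succ m ih =>
    rw [ih (by omega) fun k hk hkm => h k hk (by omega), counter_eq_add (by omega),
      if_pos (h (m + 1) (by omega) le_rfl)]
    ring

lemma counter_eq_of_not_enters (hmm : m ≤ m') (hm' : m' ≤ n)
    (h : ∀ k, m < k → k ≤ m' → ¬ Enters σ k) : counter n σ m = counter n σ m' := by
  induction hmm using Nat.decreasingInduction with
  | self => rfl
  | of_succ i hi ih =>
    rw [counter_eq_add (by omega), if_neg (h (i + 1) (by omega) hi), zero_add,
      ih fun k hk => h k (by omega)]

end Counter

section UpdateLevels

variable {n m i : ℕ} {σ : BV → BV} {u v w y : BV}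

lemma update_eq_of_ne (h : u ≠ v) (hu : σ u = y) : Function.update σ v w u = y := by
  rwa [Function.update_of_ne h]

lemma counter_update_t : counter n (Function.update σ BV.t w) m = counter n σ m :=
  counter_congr fun _ _ => Function.update_of_ne (by simp) _ _

lemma counter_update_b : counter n (Function.update σ (BV.b i) w) m = counter n σ m :=
  counter_congr fun _ _ => Function.update_of_ne (by simp) _ _

lemma counter_update_a (h : i ≤ m) : counter n (Function.update σ (BV.a i) w) m = counter n σ m :=
  counter_congr fun _ hk => Function.update_of_ne (by simp; omega) _ _

end UpdateLevels

/-! ### Phases of the run on `𝔅_n` -/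

/-- All levels above `q + 1` are coherent, where `q < n`, and so is the choice
at `b_{q+1}`. -/
structure UpperCoherent (n q : ℕ) (σ : BV → BV) : Prop where
  succ_le : q + 1 ≤ n
  level : ∀ i, q + 1 < i → i ≤ n → LevelCoherent n σ i
  exit : ExitCoherent n σ (q + 1)

/-- From `t`, the policy walks through the bonus edges of all levels up to `q`. -/
structure EnteredPrefix (n q : ℕ) (σ : BV → BV) : Prop where
  one_le : 1 ≤ q
  le : q ≤ n
  travel : σ BV.t = BV.a 1
  enters : ∀ k, 1 ≤ k → k ≤ q → Enters σ k
  leaves : ∀ k, 1 ≤ k → k < q → Leaves n σ k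

/-- The policy travels to the newly set digit `q + 1`, while the lower levels are being reset. -/
structure Landed (n q : ℕ) (σ : BV → BV) : Prop extends UpperCoherent n q σ where
  travel : σ BV.t = BV.a (q + 1)
  enters : Enters σ (q + 1)

/-- The phase in which `leave(q + 1)` is about to be applied. -/
structure LeavePhase (n q : ℕ) (σ : BV → BV) : Prop extends EnteredPrefix n q σ where
  lt : q + 1 < n
  leaves_top : Leaves n σ q
  skips : Skips n σ (q + 1)
  stays : Stays n σ (q + 1)
  enters_succ : Enters σ (q + 1 + 1)
  level : ∀ i, q + 1 < i → i ≤ n → LevelCoherent n σ i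

/-- The phase in which `stay(q)` is about to be applied. -/
structure StayPhase (n q : ℕ) (σ : BV → BV) : Prop
    extends EnteredPrefix n q σ, UpperCoherent n q σ where
  leaves_top : Leaves n σ q
  skips : Skips n σ (q + 1)
  leaves_succ : Leaves n σ (q + 1)

/-- The phase in which `enter(q + 1)` is about to be applied. -/
structure EnterPhase (n q : ℕ) (σ : BV → BV) : Prop
    extends EnteredPrefix n q σ, UpperCoherent n q σ where
  stays : Stays n σ q
  succ : (Skips n σ (q + 1) ∧ Leaves n σ (q + 1)) ∨ Boards σ (q + 1)

/-- The phase in which `travel(q + 1)` is about to be applied. -/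
structure TravelPhase (n q : ℕ) (σ : BV → BV) : Prop
    extends EnteredPrefix n q σ, UpperCoherent n q σ where
  stays : Stays n σ q
  enters_succ : Enters σ (q + 1)

/-- The phase in which the levels below `i` already board and the levels from `i` to `q` are still
entered: `board(i)` is about to be applied, or `skip(i)` if `i = q`. -/
structure BoardPhase (n q i : ℕ) (σ : BV → BV) : Prop extends Landed n q σ where
  one_le_level : 1 ≤ i
  level_le : i ≤ q
  boards : ∀ k, 1 ≤ k → k < i → Boards σ k
  enters_le : ∀ k, i ≤ k → k ≤ q → Enters σ k
  leaves : ∀ k, 1 ≤ k → k < q → Leaves n σ k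
  stays : Stays n σ q

/-- The phase in which the vertices `b_k` with `i < k ≤ q - 2` already stay: `stay(i)` is about to
be applied, or `enter(1)` if `i = 0`. -/
structure ResetPhase (n q i : ℕ) (σ : BV → BV) : Prop extends Landed n q σ where
  add_two_le : i + 2 ≤ q
  boards : ∀ k, 1 ≤ k → k < q → Boards σ k
  skips : Skips n σ q
  stays : Stays n σ q
  leaves_pred : ∀ k, k + 1 = q → Leaves n σ k
  stays_of_lt : ∀ k, i < k → k + 2 ≤ q → Stays n σ k
  leaves_of_le : ∀ k, 1 ≤ k → k ≤ i → Leaves n σ k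

/-- The phase in which the policy is canonical except that `travel(1)` is about to be applied. -/
structure ReturnPhase (n q : ℕ) (σ : BV → BV) : Prop where
  one_le : 1 ≤ q
  succ_le : q + 1 ≤ n
  travel : σ BV.t = BV.a (q + 1)
  enters_one : Enters σ 1
  enters_succ : Enters σ (q + 1)
  level : ∀ i, 1 ≤ i → i ≤ n → LevelCoherent n σ i

/-- The invariant of the run on `𝔅_n` after `j` switches: the policy is in one of the phases, and
the counter has not run ahead of `j`. -/
inductive PhaseInvariant (n : ℕ) : ℕ → (BV → BV) → Prop
  | finished {j σ} (h : 2 ^ n ≤ j + 1) : PhaseInvariant n j σ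
  | initial {j} : PhaseInvariant n j (pi0 n)
  | leave {j q σ} (P : LeavePhase n q σ) (hc : counter n σ 0 ≤ j) : PhaseInvariant n j σ
  | stay {j q σ} (P : StayPhase n q σ) (hc : counter n σ 0 ≤ j) : PhaseInvariant n j σ
  | enter {j q σ} (P : EnterPhase n q σ) (hc : counter n σ 0 ≤ j) : PhaseInvariant n j σ
  | travel {j q σ} (P : TravelPhase n q σ) (hc : 2 ^ q + counter n σ (q + 1) ≤ j) :
      PhaseInvariant n j σ
  | board {j q i σ} (P : BoardPhase n q i σ) (hc : 2 ^ q + counter n σ (q + 1) ≤ j) :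
      PhaseInvariant n j σ
  | reset {j q i σ} (P : ResetPhase n q i σ) (hc : 2 ^ q + counter n σ (q + 1) ≤ j) :
      PhaseInvariant n j σ
  | leaveOne {j σ} (P : Landed n 1 σ) (skips : Skips n σ 1) (stays : Stays n σ 1)
      (hc : 2 ^ 1 + counter n σ 2 ≤ j) : PhaseInvariant n j σ
  | enterOne {j σ} (P : Landed n 1 σ) (skips : Skips n σ 1) (leaves : Leaves n σ 1)
      (hc : 2 ^ 1 + counter n σ 2 ≤ j) : PhaseInvariant n j σ
  | back {j q σ} (P : ReturnPhase n q σ) (hc : counter n σ 0 ≤ j) : PhaseInvariant n j σ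

/-- The edge `(v,w)` is an improving switch, all vertices numbered below `v` are optimal, and every
other improving switch at `v` has both smaller reduced costs and a larger Bland number: any
sensible pivot rule that treats the vertices in the order of `𝒩_V` has to apply `(v,w)`. -/
structure ForcedSwitch (n : ℕ) (V : BV → ℚ) (v w : BV) : Prop where
  edge : BEdge n v w
  pos : 0 < redCost n V v w
  low : ∀ u, IsBVertex n u → NV n u < NV n v → IsOptimalAt n V u
  others : ∀ w', BEdge n v w' → w' ≠ w → redCost n V v w' ≤ 0 ∨
    (redCost n V v w' < redCost n V v w ∧ NB n v w < NB n v w')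

section ForcedSwitch

variable {n i : ℕ} {V : BV → ℚ}

lemma forcedSwitch_enter (hi : 1 ≤ i) (hin : i ≤ n) (ht : IsOptimalAt n V BV.t)
    (hlow : ∀ k, 1 ≤ k → k < i → IsOptimalAt n V (BV.a k) ∧ IsOptimalAt n V (BV.b k))
    (hpos : valA n V i < 2 ^ i + valB n V i)
    (skip : valA n V (i + 1) ≤ valA n V i ∨ valA n V (i + 1) < 2 ^ i + valB n V i)
    (board : V BV.t - 2 ^ i + 5 / 4 ≤ valA n V i) : ForcedSwitch n V (BV.a i) (BV.b i) := by
  refine ⟨.enter hi hin, ?_, isOptimalAt_of_NV_lt_a hin ht hlow, fun w hw hne => ?_⟩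
  · rw [redCost_enter hin]; linarith
  obtain ⟨-, -, rfl | rfl | rfl⟩ := bEdge_a_iff.1 hw
  · exact absurd rfl hne
  · rw [redCost_skip hin, redCost_enter hin]
    refine skip.imp (by intro; linarith) fun h => ⟨by linarith, ?_⟩
    unfold aN; split_ifs <;> simp [NB]
  · left; rw [redCost_board hin]; linarith

lemma forcedSwitch_skip (hi : 1 ≤ i) (hin : i ≤ n) (ht : IsOptimalAt n V BV.t)
    (hlow : ∀ k, 1 ≤ k → k < i → IsOptimalAt n V (BV.a k) ∧ IsOptimalAt n V (BV.b k))
    (hpos : valA n V i < valA n V (i + 1)) (enter : 2 ^ i + valB n V i ≤ valA n V i)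
    (board : V BV.t - 2 ^ i + 5 / 4 < valA n V (i + 1)) :
    ForcedSwitch n V (BV.a i) (aN n (i + 1)) := by
  refine ⟨.skip hi hin, ?_, isOptimalAt_of_NV_lt_a hin ht hlow, fun w hw hne => ?_⟩
  · rw [redCost_skip hin]; linarith
  obtain ⟨-, -, rfl | rfl | rfl⟩ := bEdge_a_iff.1 hw
  · left; rw [redCost_enter hin]; linarith
  · exact absurd rfl hne
  · rw [redCost_skip hin, redCost_board hin]
    refine .inr ⟨by linarith, ?_⟩
    unfold aN; split_ifs <;> simp [NB]

lemma forcedSwitch_board (hi : 1 ≤ i) (hin : i ≤ n) (ht : IsOptimalAt n V BV.t)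
    (hlow : ∀ k, 1 ≤ k → k < i → IsOptimalAt n V (BV.a k) ∧ IsOptimalAt n V (BV.b k))
    (hpos : valA n V i < V BV.t - 2 ^ i + 5 / 4) (enter : 2 ^ i + valB n V i ≤ valA n V i)
    (skip : valA n V (i + 1) ≤ valA n V i) : ForcedSwitch n V (BV.a i) BV.t := by
  refine ⟨.board hi hin, ?_, isOptimalAt_of_NV_lt_a hin ht hlow, fun w hw hne => .inl ?_⟩
  · rw [redCost_board hin]; linarith
  obtain ⟨-, -, rfl | rfl | rfl⟩ := bEdge_a_iff.1 hw
  · rw [redCost_enter hin]; linarith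
  · rw [redCost_skip hin]; linarith
  · exact absurd rfl hne

lemma forcedSwitch_stay (hi : 1 ≤ i) (hin : i ≤ n) (ht : IsOptimalAt n V BV.t)
    (ha : IsOptimalAt n V (BV.a i))
    (hlow : ∀ k, 1 ≤ k → k < i → IsOptimalAt n V (BV.a k) ∧ IsOptimalAt n V (BV.b k))
    (hpos : valB n V i < valB n V (i + 1) + 3 / 4) (leave : valA n V (i + 1) ≤ valB n V i) :
    ForcedSwitch n V (BV.b i) (bN n (i + 1)) := by
  refine ⟨.stay hi hin, ?_, isOptimalAt_of_NV_lt_b hin ht ha hlow, fun w hw hne => .inl ?_⟩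
  · rw [redCost_stay hin]; linarith
  obtain ⟨-, -, rfl | rfl⟩ := bEdge_b_iff.1 hw
  · exact absurd rfl hne
  · rw [redCost_leave hin]; linarith

lemma forcedSwitch_leave (hi : 1 ≤ i) (hin : i ≤ n) (ht : IsOptimalAt n V BV.t)
    (ha : IsOptimalAt n V (BV.a i))
    (hlow : ∀ k, 1 ≤ k → k < i → IsOptimalAt n V (BV.a k) ∧ IsOptimalAt n V (BV.b k))
    (hpos : valB n V i < valA n V (i + 1)) (stay : valB n V (i + 1) + 3 / 4 ≤ valB n V i) :
    ForcedSwitch n V (BV.b i) (aN n (i + 1)) := by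
  refine ⟨.leave hi hin, ?_, isOptimalAt_of_NV_lt_b hin ht ha hlow, fun w hw hne => .inl ?_⟩
  · rw [redCost_leave hin]; linarith
  obtain ⟨-, -, rfl | rfl⟩ := bEdge_b_iff.1 hw
  · rw [redCost_stay hin]; linarith
  · exact absurd rfl hne

lemma forcedSwitch_travel (hi : 1 ≤ i) (hin : i ≤ n) (hpos : V BV.t < valA n V i)
    (others : ∀ k, 1 ≤ k → k ≤ n → k ≠ i →
      valA n V k ≤ V BV.t ∨ (valA n V k < valA n V i ∧ i < k)) :
    ForcedSwitch n V BV.t (BV.a i) := by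
  refine ⟨.travel hi hin, ?_, fun u hu h => absurd h (not_NV_lt_NV_t hu), fun w hw hne => ?_⟩
  · rw [redCost_travel hin]; linarith
  obtain ⟨k, hk, hkn, rfl⟩ := bEdge_t_iff.1 hw
  rw [redCost_travel hkn, redCost_travel hin]
  exact (others k hk hkn (by rintro rfl; exact hne rfl)).imp (by intro; linarith)
    fun h => ⟨by linarith [h.1], by simpa [NB] using h.2⟩

end ForcedSwitch

section Prefix

variable {n q : ℕ} {σ : BV → BV} {V : BV → ℚ}

lemma UpperCoherent.update {v w : BV} (U : UpperCoherent n q σ)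
    (ha : ∀ i, q + 1 < i → BV.a i ≠ v) (hb : ∀ i, q + 1 ≤ i → BV.b i ≠ v) :
    UpperCoherent n q (Function.update σ v w) where
  succ_le := U.succ_le
  level i hi hin := (U.level i hi hin).congr (Function.update_of_ne (ha _ hi) _ _)
    (Function.update_of_ne (ha _ (by omega)) _ _) (Function.update_of_ne (hb _ hi.le) _ _)
  exit := U.exit.congr (Function.update_of_ne (ha _ (by omega)) _ _)
    (Function.update_of_ne (hb _ le_rfl) _ _)

lemma EnteredPrefix.update_of_lt {v w : BV} (P : EnteredPrefix n q σ) (ht : BV.t ≠ v)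
    (ha : ∀ i, i ≤ q → BV.a i ≠ v) (hb : ∀ i, i < q → BV.b i ≠ v) :
    EnteredPrefix n q (Function.update σ v w) where
  one_le := P.one_le
  le := P.le
  travel := update_eq_of_ne ht P.travel
  enters k hk hkq := update_eq_of_ne (ha k hkq) (P.enters k hk hkq)
  leaves k hk hkq := update_eq_of_ne (hb k hkq) (P.leaves k hk hkq)

lemma Landed.update {v w : BV} (L : Landed n q σ) (ht : BV.t ≠ v)
    (ha : ∀ i, q + 1 ≤ i → BV.a i ≠ v) (hb : ∀ i, q + 1 ≤ i → BV.b i ≠ v) :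
    Landed n q (Function.update σ v w) where
  toUpperCoherent := L.toUpperCoherent.update (fun i hi => ha i hi.le) hb
  travel := update_eq_of_ne ht L.travel
  enters := update_eq_of_ne (ha _ le_rfl) L.enters

lemma UpperCoherent.valA_le_valB_or_eq (U : UpperCoherent n q σ) (B : IsValue n σ V) {k : ℕ}
    (hk : q + 1 < k) (hkn : k ≤ n) :
    valA n V k ≤ valB n V (q + 1) ∨ valA n V k = V BV.t - 2 ^ k + 5 / 4 :=
  B.valA_le_valB_or_eq (by omega) U.level U.exit hk hkn

lemma UpperCoherent.valA_le (U : UpperCoherent n q σ) (B : IsValue n σ V)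
    (h : valB n V (q + 1) ≤ V BV.t) {k : ℕ} (hk : q + 1 < k) (hkn : k ≤ n) :
    valA n V k ≤ V BV.t := by
  rcases U.valA_le_valB_or_eq B hk hkn with h' | h'
  · exact h'.trans h
  · linarith [two_le_two_pow (i := k) (by omega)]

namespace EnteredPrefix

lemma valA_eq (P : EnteredPrefix n q σ) (B : IsValue n σ V) {k : ℕ} (hk : 1 ≤ k) (hkq : k ≤ q) :
    valA n V k = 2 * 2 ^ q - 2 ^ k + valB n V q :=
  B.valA_of_entered_block P.le hkq hk (fun i hi => P.enters i (hk.trans hi))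
    fun i hi => P.leaves i (hk.trans hi)

lemma val_t (P : EnteredPrefix n q σ) (B : IsValue n σ V) :
    V BV.t = 2 * 2 ^ q - 2 + valB n V q := by
  rw [B.travel (P.one_le.trans P.le) P.travel, P.valA_eq B le_rfl P.one_le, pow_one]

lemma isOptimalAt_t (P : EnteredPrefix n q σ) (B : IsValue n σ V)
    (hsucc : valA n V (q + 1) ≤ V BV.t)
    (hup : ∀ k, q + 1 < k → k ≤ n → valA n V k ≤ V BV.t) : IsOptimalAt n V BV.t := by
  refine _root_.isOptimalAt_t fun k hk hkn => ?_
  rcases le_or_gt k q with h | h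
  · rw [P.valA_eq B hk h, P.val_t B]
    linarith [two_le_two_pow hk]
  rcases eq_or_ne k (q + 1) with rfl | hne
  · exact hsucc
  · exact hup k (by omega) hkn

lemma isOptimalAt_of_lt (P : EnteredPrefix n q σ) (B : IsValue n σ V) {k : ℕ} (hk : 1 ≤ k)
    (hkq : k < q) : IsOptimalAt n V (BV.a k) ∧ IsOptimalAt n V (BV.b k) := by
  have hle := P.le
  have hA := P.valA_eq B hk hkq.le
  have hA' := P.valA_eq B (k := k + 1) (by omega) hkq
  have hE := B.valA_of_enters hk (by omega) (P.enters k hk hkq.le)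
  have hE' := B.valA_of_enters (i := k + 1) (by omega) (by omega) (P.enters _ (by omega) hkq)
  have hL := B.valB_of_leaves hk (by omega) (P.leaves k hk hkq)
  have ht := P.val_t B
  have h2 := two_le_two_pow hk
  rw [pow_succ] at hA' hE'
  exact ⟨isOptimalAt_a (by linarith) (by linarith) (by linarith),
    isOptimalAt_b (by linarith) (by linarith)⟩

lemma isOptimalAt_a_top (P : EnteredPrefix n q σ) (B : IsValue n σ V)
    (h : valA n V (q + 1) ≤ 2 ^ q + valB n V q) : IsOptimalAt n V (BV.a q) := by
  have hA := P.valA_eq B P.one_le le_rfl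
  have hE := B.valA_of_enters P.one_le P.le (P.enters q P.one_le le_rfl)
  have ht := P.val_t B
  exact isOptimalAt_a (by linarith) (by linarith) (by linarith)

lemma isOptimalAt_of_le (P : EnteredPrefix n q σ) (B : IsValue n σ V)
    (ha : valA n V (q + 1) ≤ 2 ^ q + valB n V q) (hb : IsOptimalAt n V (BV.b q)) {k : ℕ}
    (hk : 1 ≤ k) (hkq : k < q + 1) : IsOptimalAt n V (BV.a k) ∧ IsOptimalAt n V (BV.b k) := by
  rcases eq_or_ne k q with rfl | hne
  · exact ⟨P.isOptimalAt_a_top B ha, hb⟩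
  · exact P.isOptimalAt_of_lt B hk (by omega)

end EnteredPrefix

namespace Landed

lemma val_t (L : Landed n q σ) (B : IsValue n σ V) : V BV.t = 2 * 2 ^ q + valB n V (q + 1) := by
  rw [B.travel L.succ_le L.travel, B.valA_of_enters (by omega) L.succ_le L.enters, pow_succ]
  ring

lemma valA_succ (L : Landed n q σ) (B : IsValue n σ V) : valA n V (q + 1) = V BV.t :=
  (B.travel L.succ_le L.travel).symm

lemma isOptimalAt_t (L : Landed n q σ) (B : IsValue n σ V)
    (h : ∀ k, 1 ≤ k → k ≤ q → valA n V k ≤ V BV.t) : IsOptimalAt n V BV.t := by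
  refine _root_.isOptimalAt_t fun k hk hkn => ?_
  have ht := L.val_t B
  have hpos : (0 : ℚ) < 2 ^ q := by positivity
  rcases lt_trichotomy k (q + 1) with hlt | rfl | hgt
  · exact h k hk (by omega)
  · exact (L.valA_succ B).le
  · exact L.valA_le B (by linarith) hgt hkn

end Landed

end Prefix

section Phases

variable {n j q i : ℕ} {σ : BV → BV} {V : BV → ℚ}

lemma phaseInvariant_of_not_enters_succ (P : EnteredPrefix n q σ) (hq : q + 1 ≤ n)
    (hE : ¬ Enters σ (q + 1)) (hlevel : ∀ i, 1 ≤ i → i ≤ n → LevelCoherent n σ i)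
    (hc : counter n σ 0 ≤ j) : PhaseInvariant n j σ := by
  have hup : ∀ i, q + 1 < i → i ≤ n → LevelCoherent n σ i := fun i hi => hlevel i (by omega)
  have hsucc := hlevel (q + 1) (by omega) hq
  rcases (hlevel q P.one_le P.le).exitCoherent_of_enters (P.enters q P.one_le le_rfl) with
    ⟨-, hB, hS⟩ | ⟨hor, hL⟩
  · exact .enter ⟨P, ⟨hq, hup, hsucc.exitCoherent_of_boards hB⟩, hS, .inr hB⟩ hc
  have hS : Skips n σ (q + 1) := (hor.resolve_left (by omega)).resolve_left hE
  rcases hsucc with h | ⟨-, ⟨hlt, hE', hS'⟩ | ⟨hL', hor'⟩⟩ | h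
  · exact absurd h.1 hE
  · exact .leave ⟨P, hlt, hL, hS, hS', hE', hup⟩ hc
  · exact .stay ⟨P, ⟨hq, hup, .inr ⟨hor'.imp_right .inr, hL'⟩⟩, hL, hS, hL'⟩ hc
  · exact absurd h.1 hS.not_boards

lemma phaseInvariant_of_coherent (ht : σ BV.t = BV.a 1) (hE : Enters σ 1)
    (hlevel : ∀ i, 1 ≤ i → i ≤ n → LevelCoherent n σ i) (hc : counter n σ 0 ≤ j) :
    PhaseInvariant n j σ := by
  classical
  by_cases hall : ∀ k, 1 ≤ k → k ≤ n → Enters σ k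
  · have := counter_zero_add_one le_rfl hall
    exact .finished (by omega)
  have hex : ∃ k, 1 ≤ k ∧ k ≤ n ∧ ¬ Enters σ k := by push Not at hall; exact hall
  obtain ⟨q, hq⟩ : ∃ q, Nat.find hex = q + 1 :=
    Nat.exists_eq_succ_of_ne_zero (by have := (Nat.find_spec hex).1; omega)
  obtain ⟨-, hqn, hnot⟩ := hq ▸ Nat.find_spec hex
  have henters : ∀ k, 1 ≤ k → k ≤ q → Enters σ k := fun k hk hkq => by
    by_contra h
    exact Nat.find_min hex (m := k) (by omega) ⟨hk, by omega, h⟩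
  have hq1 : q ≠ 0 := by rintro rfl; exact hnot hE
  have hleaves : ∀ k, 1 ≤ k → k < q → Leaves n σ k := fun k hk hkq =>
    ((hlevel k hk (by omega)).exitCoherent_of_enters (henters k hk hkq.le)).leaves
      (henters (k + 1) (by omega) hkq).not_boards
  exact phaseInvariant_of_not_enters_succ ⟨by omega, by omega, ht, henters, hleaves⟩ hqn hnot
    hlevel hc

/-- A forced switch leads to a policy that satisfies the invariant for `j + 1`. -/
def HasForcedStep (n j : ℕ) (σ : BV → BV) (V : BV → ℚ) : Prop :=
  ∃ v w, ForcedSwitch n V v w ∧ PhaseInvariant n (j + 1) (Function.update σ v w)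

lemma valA_pi0 (B : IsValue n (pi0 n) V) (hi : 1 ≤ i) (hin : i ≤ n + 1) : valA n V i = 0 := by
  induction hin using Nat.decreasingInduction with
  | self => exact B.valA_top
  | of_succ k hk ih => rw [B.valA_of_skips hi (by omega) rfl, ih (by omega)]

lemma forcedSwitch_pi0 (hn : 1 ≤ n) (B : IsValue n (pi0 n) V) :
    ForcedSwitch n V (BV.a 1) (BV.b 1) := by
  have h1 := valA_pi0 B le_rfl (by omega)
  have h2 := valA_pi0 B (i := 1 + 1) (by omega) (by omega)
  have hb : valB n V 1 = 0 := (B.valB_of_leaves le_rfl hn rfl).trans h2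
  have ht : V BV.t = 0 := (B.travel hn rfl).trans h1
  refine forcedSwitch_enter le_rfl hn (isOptimalAt_t fun k hk hkn => ?_) (by omega) ?_ ?_ ?_
  · rw [valA_pi0 B hk (by omega), ht]
  · rw [h1, hb]; norm_num
  · exact .inl (by rw [h1, h2])
  · rw [h1, ht]; norm_num

lemma phaseInvariant_update_pi0 (hn : 1 ≤ n) :
    PhaseInvariant n (j + 1) (Function.update (pi0 n) (BV.a 1) (BV.b 1)) := by
  set σ' := Function.update (pi0 n) (BV.a 1) (BV.b 1)
  have hE : Enters σ' 1 := Function.update_self _ _ _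
  have hS : ∀ i, i ≠ 1 → Skips n σ' i := fun i hi => update_eq_of_ne (by simpa using hi) rfl
  have hL : ∀ i, Leaves n σ' i := fun i => update_eq_of_ne (by simp) rfl
  refine phaseInvariant_of_coherent (update_eq_of_ne (by simp) rfl) hE (fun i hi _ => ?_) ?_
  · by_cases h : i = 1
    · subst h
      exact .inl ⟨hE, .inr ⟨.inr (.inr (hS 2 (by omega))), hL 1⟩⟩
    · exact .inr (.inl ⟨hS i h, .inr ⟨hL i, .inr (hS (i + 1) (by omega))⟩⟩)
  · have h0 := counter_zero_add_one (σ := σ') hn fun k hk hk1 => by rwa [le_antisymm hk1 hk]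
    have h1 := counter_eq_of_not_enters (σ := σ') hn le_rfl fun k hk _ =>
      (hS k (by omega)).not_enters
    have hn0 : counter n σ' n = 0 := by simp [counter]
    omega

lemma LeavePhase.forcedSwitch (P : LeavePhase n q σ) (B : IsValue n σ V) :
    ForcedSwitch n V (BV.b (q + 1)) (aN n (q + 1 + 1)) := by
  have hlt := P.lt
  have ht := P.val_t B
  have hA := B.valA_of_skips (by omega) hlt.le P.skips
  have hB := B.valB_of_stays (by omega) hlt.le P.stays
  have hA' := B.valA_of_enters (by omega) (by omega) P.enters_succ
  have hBq := B.valB_of_leaves P.one_le P.le P.leaves_top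
  have h2 := two_le_two_pow P.one_le
  have hpow : (2 : ℚ) ^ (q + 1) = 2 * 2 ^ q := by ring
  have hpow' : (2 : ℚ) ^ (q + 1 + 1) = 4 * 2 ^ q := by ring
  have hup : ∀ k, q + 1 < k → k ≤ n → valA n V k ≤ V BV.t := by
    intro k hk hkn
    rcases B.valA_le_valA_or_eq (i := q + 1 + 1) (by omega) P.level P.enters_succ.not_boards hk
      hkn with h | h
    · linarith
    · linarith [two_le_two_pow (i := k) (by omega)]
  exact forcedSwitch_leave (by omega) (by omega) (P.isOptimalAt_t B (by linarith) hup)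
    (isOptimalAt_a (by linarith) (by linarith) (by linarith))
    (fun k => P.isOptimalAt_of_le B (by linarith) (isOptimalAt_b (by linarith) (by linarith)))
    (by linarith) (by linarith)

lemma LeavePhase.update (P : LeavePhase n q σ) :
    StayPhase n q (Function.update σ (BV.b (q + 1)) (aN n (q + 1 + 1))) where
  toEnteredPrefix := P.toEnteredPrefix.update_of_lt (by simp) (by simp) (by simp; omega)
  succ_le := P.lt.le
  level i hi hin := (P.level i hi hin).congr (Function.update_of_ne (by simp) _ _)
    (Function.update_of_ne (by simp) _ _) (Function.update_of_ne (by simp; omega) _ _)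
  exit := .inr ⟨.inr (.inl (update_eq_of_ne (by simp) P.enters_succ)), Function.update_self _ _ _⟩
  leaves_top := update_eq_of_ne (by simp) P.leaves_top
  skips := update_eq_of_ne (by simp) P.skips
  leaves_succ := Function.update_self _ _ _

lemma StayPhase.forcedSwitch (P : StayPhase n q σ) (B : IsValue n σ V) :
    ForcedSwitch n V (BV.b q) (bN n (q + 1)) := by
  have hq := P.one_le
  have ht := P.val_t B
  have hA := B.valA_of_skips (by omega) P.succ_le P.skips
  have hB := B.valB_of_leaves (by omega) P.succ_le P.leaves_succ
  have hBq := B.valB_of_leaves hq P.le P.leaves_top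
  have h2 := two_le_two_pow hq
  exact forcedSwitch_stay hq P.le
    (P.isOptimalAt_t B (by linarith) fun k => P.valA_le B (by linarith))
    (P.isOptimalAt_a_top B (by linarith)) (fun k => P.isOptimalAt_of_lt B)
    (by linarith) (by linarith)

lemma StayPhase.update (P : StayPhase n q σ) :
    EnterPhase n q (Function.update σ (BV.b q) (bN n (q + 1))) where
  toEnteredPrefix := P.toEnteredPrefix.update_of_lt (by simp) (by simp) (by simp; omega)
  toUpperCoherent := P.toUpperCoherent.update (by simp) (by simp; omega)
  stays := Function.update_self _ _ _
  succ := .inl ⟨update_eq_of_ne (by simp) P.skips, update_eq_of_ne (by simp) P.leaves_succ⟩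

lemma EnterPhase.forcedSwitch (P : EnterPhase n q σ) (B : IsValue n σ V) :
    ForcedSwitch n V (BV.a (q + 1)) (BV.b (q + 1)) := by
  have hq := P.one_le
  have hqn := P.succ_le
  have ht := P.val_t B
  have hBq := B.valB_of_stays hq P.le P.stays
  have h2 := two_le_two_pow hq
  have hpow : (2 : ℚ) ^ (q + 1) = 2 * 2 ^ q := by ring
  have hAB : valA n V (q + 1) = valB n V (q + 1) := by
    rcases P.succ with ⟨hS, hL⟩ | hT
    · rw [B.valA_of_skips (by omega) hqn hS, B.valB_of_leaves (by omega) hqn hL]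
    · rw [B.valA_of_boards (by omega) hqn hT]; linarith
  have hup : ∀ k, q + 1 < k → k ≤ n → valA n V k ≤ valA n V (q + 1) := by
    intro k hk hkn
    rcases P.valA_le_valB_or_eq B hk hkn with h | h
    · linarith
    · have : (2 : ℚ) ^ (q + 1) ≤ 2 ^ k := pow_le_pow_right₀ (by norm_num) hk.le
      linarith
  have hsucc : valA n V (q + 1 + 1) ≤ valA n V (q + 1) := by
    rcases hqn.lt_or_eq with h | rfl
    · exact hup _ (by omega) h
    · exact B.valA_top.trans_le (B.valA_nonneg (by omega) (by omega))
  exact forcedSwitch_enter (by omega) hqn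
    (P.isOptimalAt_t B (by linarith) fun k hk hkn => by linarith [hup k hk hkn])
    (fun k => P.isOptimalAt_of_le B (by linarith) (isOptimalAt_b (by linarith) (by linarith)))
    (by linarith) (.inl hsucc) (by linarith)

lemma EnterPhase.update (P : EnterPhase n q σ) :
    TravelPhase n q (Function.update σ (BV.a (q + 1)) (BV.b (q + 1))) where
  toEnteredPrefix := P.toEnteredPrefix.update_of_lt (by simp) (by simp; omega) (by simp)
  toUpperCoherent := P.toUpperCoherent.update (by simp; omega) (by simp)
  stays := update_eq_of_ne (by simp) P.stays
  enters_succ := Function.update_self _ _ _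

lemma EnterPhase.counter_add_one (P : EnterPhase n q σ) :
    counter n σ 0 + 1 = 2 ^ q + counter n σ (q + 1) := by
  have hnot : ¬ Enters σ (q + 1) := P.succ.elim (fun h => h.1.not_enters) Boards.not_enters
  rw [counter_zero_add_one P.le P.enters, counter_eq_add P.succ_le, if_neg hnot, zero_add]

lemma TravelPhase.forcedSwitch (P : TravelPhase n q σ) (B : IsValue n σ V) :
    ForcedSwitch n V BV.t (BV.a (q + 1)) := by
  have ht := P.val_t B
  have hBq := B.valB_of_stays P.one_le P.le P.stays
  have hA := B.valA_of_enters (by omega) P.succ_le P.enters_succ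
  have h2 := two_le_two_pow P.one_le
  rw [pow_succ] at hA
  refine forcedSwitch_travel (by omega) P.succ_le (by linarith) fun k hk hkn hne => .inl ?_
  rcases le_or_gt k q with h | h
  · rw [P.valA_eq B hk h]; linarith [two_le_two_pow hk]
  · exact P.valA_le B (by linarith) (by omega) hkn

lemma TravelPhase.update (P : TravelPhase n q σ) :
    BoardPhase n q 1 (Function.update σ BV.t (BV.a (q + 1))) where
  toUpperCoherent := P.toUpperCoherent.update (by simp) (by simp)
  travel := Function.update_self _ _ _
  enters := update_eq_of_ne (by simp) P.enters_succ
  one_le_level := le_rfl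
  level_le := P.one_le
  boards k hk hk1 := by omega
  enters_le k hk hkq := update_eq_of_ne (by simp) (P.enters k hk hkq)
  leaves k hk hkq := update_eq_of_ne (by simp) (P.leaves k hk hkq)
  stays := update_eq_of_ne (by simp) P.stays

end Phases

section Phases

variable {n j q i : ℕ} {σ : BV → BV} {V : BV → ℚ}

lemma BoardPhase.valA_of_lt (P : BoardPhase n q i σ) (B : IsValue n σ V) {k : ℕ} (hk : 1 ≤ k)
    (hki : k < i) : valA n V k = V BV.t - 2 ^ k + 5 / 4 :=
  B.valA_of_boards hk (by have := P.level_le; have := P.succ_le; omega) (P.boards k hk hki)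

lemma BoardPhase.valA_of_ge (P : BoardPhase n q i σ) (B : IsValue n σ V) {k : ℕ} (hik : i ≤ k)
    (hkq : k ≤ q) : valA n V k = V BV.t - 2 ^ k + 3 / 4 := by
  have hi := P.one_le_level
  have hq := P.succ_le
  rw [B.valA_of_entered_block (by omega) hkq (by omega) (fun l hl => P.enters_le l (by omega))
    fun l hl => P.leaves l (by omega), P.val_t B, B.valB_of_stays (by omega) (by omega) P.stays]
  ring

lemma BoardPhase.valA_mem_Icc (P : BoardPhase n q i σ) (B : IsValue n σ V) {k : ℕ} (hk : 1 ≤ k)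
    (hkq : k ≤ q) : valA n V k ∈ Set.Icc (V BV.t - 2 ^ k + 3 / 4) (V BV.t - 2 ^ k + 5 / 4) := by
  rw [Set.mem_Icc]
  rcases lt_or_ge k i with h | h
  · rw [P.valA_of_lt B hk h]; constructor <;> linarith
  · rw [P.valA_of_ge B h hkq]; constructor <;> linarith

lemma BoardPhase.isOptimalAt_t (P : BoardPhase n q i σ) (B : IsValue n σ V) :
    IsOptimalAt n V BV.t :=
  P.toLanded.isOptimalAt_t B fun k hk hkq => by
    linarith [(P.valA_mem_Icc B hk hkq).2, two_le_two_pow hk]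

lemma BoardPhase.isOptimalAt_of_lt (P : BoardPhase n q i σ) (B : IsValue n σ V) {k : ℕ}
    (hk : 1 ≤ k) (hki : k < i) : IsOptimalAt n V (BV.a k) ∧ IsOptimalAt n V (BV.b k) := by
  have hiq := P.level_le
  have hq := P.succ_le
  have hA := P.valA_of_lt B hk hki
  have hA' := Set.mem_Icc.1 (P.valA_mem_Icc B (k := k + 1) (by omega) (by omega))
  have hB := B.valB_of_leaves hk (by omega) (P.leaves k hk (by omega))
  have h2 := two_le_two_pow hk
  rw [pow_succ] at hA'
  refine ⟨isOptimalAt_a (by linarith) (by linarith) (by linarith), isOptimalAt_b ?_ hB.ge⟩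
  rcases lt_or_ge (k + 1) q with h | h
  · have hA'' := (P.valA_mem_Icc B (k := k + 1 + 1) (by omega) (by omega)).2
    have hB' := B.valB_of_leaves (by omega) (by omega) (P.leaves (k + 1) (by omega) h)
    rw [pow_succ, pow_succ] at hA''
    linarith
  · obtain rfl : q = k + 1 := by omega
    have ht := P.val_t B
    have hB' := B.valB_of_stays (by omega) (by omega) P.stays
    rw [pow_succ] at ht
    linarith

lemma BoardPhase.enter_le_valA (P : BoardPhase n q i σ) (B : IsValue n σ V) :
    2 ^ i + valB n V i ≤ valA n V i :=
  (B.valA_of_enters P.one_le_level (by have := P.level_le; have := P.succ_le; omega)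
    (P.enters_le i le_rfl P.level_le)).ge

lemma BoardPhase.forcedSwitch_board (P : BoardPhase n q i σ) (B : IsValue n σ V) (hiq : i < q) :
    ForcedSwitch n V (BV.a i) BV.t := by
  have hA := P.valA_of_ge B le_rfl hiq.le
  have hA' := P.valA_of_ge B (k := i + 1) (by omega) hiq
  have h2 := two_le_two_pow P.one_le_level
  rw [pow_succ] at hA'
  exact _root_.forcedSwitch_board P.one_le_level (by have := P.succ_le; omega)
    (P.isOptimalAt_t B) (fun k => P.isOptimalAt_of_lt B) (by linarith) (P.enter_le_valA B)
    (by linarith)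

lemma BoardPhase.update_board (P : BoardPhase n q i σ) (hiq : i < q) :
    BoardPhase n q (i + 1) (Function.update σ (BV.a i) BV.t) where
  toLanded := P.toLanded.update (by simp) (by simp; omega) (by simp)
  one_le_level := by omega
  level_le := hiq
  boards k hk hki := by
    rcases eq_or_ne k i with rfl | hne
    · exact Function.update_self _ _ _
    · exact update_eq_of_ne (by simpa using hne) (P.boards k hk (by omega))
  enters_le k hk hkq := update_eq_of_ne (by simp; omega) (P.enters_le k (by omega) hkq)
  leaves k hk hkq := update_eq_of_ne (by simp) (P.leaves k hk hkq)
  stays := update_eq_of_ne (by simp) P.stays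

lemma BoardPhase.forcedSwitch_skip (P : BoardPhase n q q σ) (B : IsValue n σ V) :
    ForcedSwitch n V (BV.a q) (aN n (q + 1)) := by
  have hA := P.valA_of_ge B le_rfl le_rfl
  have hA' := P.valA_succ B
  have h2 := two_le_two_pow P.one_le_level
  exact _root_.forcedSwitch_skip P.one_le_level (by have := P.succ_le; omega)
    (P.isOptimalAt_t B) (fun k => P.isOptimalAt_of_lt B) (by linarith) (P.enter_le_valA B)
    (by linarith)

lemma BoardPhase.update_skip (P : BoardPhase n (i + 2) (i + 2) σ) :
    ResetPhase n (i + 2) i (Function.update σ (BV.a (i + 2)) (aN n (i + 2 + 1))) where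
  toLanded := P.toLanded.update (by simp) (by simp; omega) (by simp)
  add_two_le := le_rfl
  boards k hk hkq := update_eq_of_ne (by simp; omega) (P.boards k hk hkq)
  skips := Function.update_self _ _ _
  stays := update_eq_of_ne (by simp) P.stays
  leaves_pred k hk := update_eq_of_ne (by simp) (P.leaves k (by omega) (by omega))
  stays_of_lt k hk hkq := by omega
  leaves_of_le k hk hki := update_eq_of_ne (by simp) (P.leaves k hk (by omega))

lemma BoardPhase.hasForcedStep (P : BoardPhase n q i σ) (B : IsValue n σ V)
    (hc : 2 ^ q + counter n σ (q + 1) ≤ j) : HasForcedStep n j σ V := by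
  rcases P.level_le.lt_or_eq with h | rfl
  · exact ⟨_, _, P.forcedSwitch_board B h,
      .board (P.update_board h) (by rw [counter_update_a (by omega)]; omega)⟩
  refine ⟨_, _, P.forcedSwitch_skip B, ?_⟩
  have hc' : 2 ^ i + counter n (Function.update σ (BV.a i) (aN n (i + 1))) (i + 1) ≤ j + 1 := by
    rw [counter_update_a (by omega)]; omega
  obtain rfl | ⟨m, rfl⟩ : i = 1 ∨ ∃ m, i = m + 2 := by
    rcases P.one_le_level.eq_or_lt with h | h
    · exact .inl h.symm
    · exact .inr ⟨i - 2, by omega⟩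
  · exact .leaveOne (P.toLanded.update (by simp) (by simp; omega) (by simp))
      (Function.update_self _ _ _) (update_eq_of_ne (by simp) P.stays) hc'
  · exact .reset P.update_skip hc'

namespace ResetPhase

lemma valA_of_lt (P : ResetPhase n q i σ) (B : IsValue n σ V) {k : ℕ} (hk : 1 ≤ k)
    (hkq : k < q) : valA n V k = V BV.t - 2 ^ k + 5 / 4 :=
  B.valA_of_boards hk (by have := P.succ_le; omega) (P.boards k hk hkq)

lemma valA_top (P : ResetPhase n q i σ) (B : IsValue n σ V) : valA n V q = V BV.t :=
  (B.valA_of_skips (by have := P.add_two_le; omega) (by have := P.succ_le; omega) P.skips).trans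
    (P.valA_succ B)

lemma valB_of_le (P : ResetPhase n q i σ) (B : IsValue n σ V) {k : ℕ} (hk : 1 ≤ k)
    (hki : k ≤ i) : valB n V k = V BV.t - 2 * 2 ^ k + 5 / 4 := by
  have hiq := P.add_two_le
  rw [B.valB_of_leaves hk (by have := P.succ_le; omega) (P.leaves_of_le k hk hki),
    P.valA_of_lt B (by omega) (by omega), pow_succ]
  ring

lemma le_valB_of_lt (P : ResetPhase n q i σ) (B : IsValue n σ V) {k : ℕ} (hik : i < k)
    (hkq : k + 1 ≤ q) : V BV.t ≤ valB n V k := by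
  have hq := P.succ_le
  obtain ⟨m, hm⟩ : ∃ m, q = m + 1 := ⟨q - 1, by omega⟩
  have hkm : k ≤ m := by omega
  induction hkm using Nat.decreasingInduction with
  | self =>
    rw [B.valB_of_leaves (by omega) (by omega) (P.leaves_pred m hm.symm), ← hm, P.valA_top B]
  | of_succ k hk ih =>
    rw [B.valB_of_stays (by omega) (by omega) (P.stays_of_lt k hik (by omega))]
    linarith [ih (by omega) (by omega)]

lemma isOptimalAt_t (P : ResetPhase n q i σ) (B : IsValue n σ V) : IsOptimalAt n V BV.t := by
  refine P.toLanded.isOptimalAt_t B fun k hk hkq => ?_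
  rcases hkq.lt_or_eq with h | rfl
  · rw [P.valA_of_lt B hk h]; linarith [two_le_two_pow hk]
  · exact (P.valA_top B).le

lemma isOptimalAt_a_of_le (P : ResetPhase n q i σ) (B : IsValue n σ V) {k : ℕ} (hk : 1 ≤ k)
    (hki : k ≤ i) : IsOptimalAt n V (BV.a k) := by
  have hiq := P.add_two_le
  have hA := P.valA_of_lt B hk (by omega)
  have hB := P.valB_of_le B hk hki
  have hA' := P.valA_of_lt B (k := k + 1) (by omega) (by omega)
  have h2 := two_le_two_pow hk
  rw [pow_succ] at hA'
  exact isOptimalAt_a (by linarith) (by linarith) (by linarith)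

lemma isOptimalAt_b_of_lt (P : ResetPhase n q i σ) (B : IsValue n σ V) {k : ℕ} (hk : 1 ≤ k)
    (hki : k < i) : IsOptimalAt n V (BV.b k) := by
  have hiq := P.add_two_le
  have hB := P.valB_of_le B hk hki.le
  have hB' := P.valB_of_le B (k := k + 1) (by omega) hki
  have hL := B.valB_of_leaves hk (by have := P.succ_le; omega) (P.leaves_of_le k hk hki.le)
  have h2 := two_le_two_pow hk
  rw [pow_succ] at hB'
  exact isOptimalAt_b (by linarith) hL.ge

lemma forcedSwitch_stay (P : ResetPhase n q (i + 1) σ) (B : IsValue n σ V) :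
    ForcedSwitch n V (BV.b (i + 1)) (bN n (i + 1 + 1)) := by
  have hiq := P.add_two_le
  have hq := P.succ_le
  have hB := P.valB_of_le B (k := i + 1) (by omega) le_rfl
  have hB' := P.le_valB_of_lt B (k := i + 1 + 1) (by omega) (by omega)
  have h2 := two_le_two_pow (i := i + 1) (by omega)
  exact _root_.forcedSwitch_stay (by omega) (by omega) (P.isOptimalAt_t B)
    (P.isOptimalAt_a_of_le B (by omega) le_rfl)
    (fun k hk hki => ⟨P.isOptimalAt_a_of_le B hk hki.le, P.isOptimalAt_b_of_lt B hk hki⟩)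
    (by linarith)
    (B.valB_of_leaves (by omega) (by omega) (P.leaves_of_le _ (by omega) le_rfl)).ge

lemma update_stay (P : ResetPhase n q (i + 1) σ) :
    ResetPhase n q i (Function.update σ (BV.b (i + 1)) (bN n (i + 1 + 1))) where
  toLanded := P.toLanded.update (by simp) (by simp) (by have := P.add_two_le; simp; omega)
  add_two_le := by have := P.add_two_le; omega
  boards k hk hkq := update_eq_of_ne (by simp) (P.boards k hk hkq)
  skips := update_eq_of_ne (by simp) P.skips
  stays := update_eq_of_ne (by have := P.add_two_le; simp; omega) P.stays
  leaves_pred k hk := update_eq_of_ne (by have := P.add_two_le; simp; omega) (P.leaves_pred k hk)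
  stays_of_lt k hk hkq := by
    rcases eq_or_ne k (i + 1) with rfl | hne
    · exact Function.update_self _ _ _
    · exact update_eq_of_ne (by simpa using hne) (P.stays_of_lt k (by omega) hkq)
  leaves_of_le k hk hki := update_eq_of_ne (by simp; omega) (P.leaves_of_le k hk (by omega))

lemma forcedSwitch_enter (P : ResetPhase n q 0 σ) (B : IsValue n σ V) :
    ForcedSwitch n V (BV.a 1) (BV.b 1) := by
  have hq2 := P.add_two_le
  have hA := P.valA_of_lt B le_rfl (by omega)
  have hB := P.le_valB_of_lt B zero_lt_one (by omega)
  have hA' : valA n V (1 + 1) ≤ V BV.t := by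
    rcases hq2.eq_or_lt with rfl | h
    · exact (P.valA_top B).le
    · rw [P.valA_of_lt B (by omega) h]; linarith [two_le_two_pow (i := 1 + 1) (by omega)]
  rw [pow_one] at hA
  exact _root_.forcedSwitch_enter le_rfl (by have := P.succ_le; omega) (P.isOptimalAt_t B)
    (by omega) (by linarith) (.inr (by linarith)) (by linarith)

lemma levelCoherent_update_enter (P : ResetPhase n q 0 σ) {k : ℕ} (hk : 1 ≤ k) (hkn : k ≤ n) :
    LevelCoherent n (Function.update σ (BV.a 1) (BV.b 1)) k := by
  have hq2 := P.add_two_le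
  have hq := P.succ_le
  set σ' := Function.update σ (BV.a 1) (BV.b 1)
  have hE : Enters σ' 1 := Function.update_self _ _ _
  have U : Landed n q σ' := P.toLanded.update (by simp) (by simp; omega) (by simp)
  have hT : ∀ l, 2 ≤ l → l < q → Boards σ' l := fun l hl hlq =>
    update_eq_of_ne (by simp; omega) (P.boards l (by omega) hlq)
  have hS : Skips n σ' q := update_eq_of_ne (by simp; omega) P.skips
  rcases lt_trichotomy k q with h | rfl | h
  · have hb : (Boards σ' (k + 1) ∧ Stays n σ' k) ∨ (Skips n σ' (k + 1) ∧ Leaves n σ' k) := by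
      rcases (Nat.succ_le_of_lt h).lt_or_eq with h' | rfl
      · exact .inl ⟨hT _ (by omega) h', update_eq_of_ne (by simp) (P.stays_of_lt k hk h')⟩
      · exact .inr ⟨hS, update_eq_of_ne (by simp) (P.leaves_pred k rfl)⟩
    rcases eq_or_ne k 1 with rfl | hne
    · exact .inl ⟨hE, hb.imp (fun h => ⟨by omega, h⟩) fun h => ⟨.inr (.inr h.1), h.2⟩⟩
    · exact .inr (.inr ⟨hT k (by omega) h, by omega, hb⟩)
  · exact .inr (.inl ⟨hS, .inl ⟨by omega, U.enters, update_eq_of_ne (by simp) P.stays⟩⟩)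
  rcases eq_or_ne k (q + 1) with rfl | hne
  · exact .inl ⟨U.enters, U.exit⟩
  · exact U.level k (by omega) hkn

lemma counter_update_enter (P : ResetPhase n q 0 σ) :
    counter n (Function.update σ (BV.a 1) (BV.b 1)) 0 = 1 + 2 ^ q + counter n σ (q + 1) := by
  have hq2 := P.add_two_le
  have hq := P.succ_le
  set σ' := Function.update σ (BV.a 1) (BV.b 1) with hσ'
  have hE : Enters σ' 1 := Function.update_self _ _ _
  have hE' : Enters σ' (q + 1) := update_eq_of_ne (by simp; omega) P.enters
  have hnot : ∀ k, 1 < k → k ≤ q → ¬ Enters σ' k := by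
    intro k hk hkq
    rcases hkq.lt_or_eq with h | rfl
    · exact Boards.not_enters (update_eq_of_ne (by simp; omega) (P.boards k (by omega) h))
    · exact Skips.not_enters (n := n) (update_eq_of_ne (by simp; omega) P.skips)
  rw [counter_eq_add (by omega), if_pos hE, counter_eq_of_not_enters (by omega) (by omega) hnot,
    counter_eq_add hq, if_pos hE', hσ', counter_update_a (by omega)]
  ring

lemma hasForcedStep (P : ResetPhase n q i σ) (B : IsValue n σ V)
    (hc : 2 ^ q + counter n σ (q + 1) ≤ j) : HasForcedStep n j σ V := by
  have hq2 := P.add_two_le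
  rcases i with - | i
  · exact ⟨_, _, P.forcedSwitch_enter B, .back
      ⟨by omega, P.succ_le, update_eq_of_ne (by simp) P.travel, Function.update_self _ _ _,
        update_eq_of_ne (by simp; omega) P.enters, fun k => P.levelCoherent_update_enter⟩
      (by rw [P.counter_update_enter]; omega)⟩
  · exact ⟨_, _, P.forcedSwitch_stay B, .reset P.update_stay (by rw [counter_update_b]; omega)⟩

end ResetPhase

namespace Landed

lemma isOptimalAt_t_of_skips_one (L : Landed n 1 σ) (B : IsValue n σ V) (hS : Skips n σ 1) :
    IsOptimalAt n V BV.t :=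
  L.isOptimalAt_t B fun k hk hk1 => by
    obtain rfl := le_antisymm hk1 hk
    rw [B.valA_of_skips le_rfl (by have := L.succ_le; omega) hS, L.valA_succ B]

lemma hasForcedStep_leave_one (L : Landed n 1 σ) (B : IsValue n σ V) (hS : Skips n σ 1)
    (hstay : Stays n σ 1) (hc : 2 ^ 1 + counter n σ 2 ≤ j) : HasForcedStep n j σ V := by
  have hn := L.succ_le
  have ht := L.val_t B
  have hA' := L.valA_succ B
  have hA := B.valA_of_skips le_rfl (by omega) hS
  have hB := B.valB_of_stays le_rfl (by omega) hstay
  refine ⟨_, _, forcedSwitch_leave le_rfl (by omega) (L.isOptimalAt_t_of_skips_one B hS)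
    (isOptimalAt_a (by linarith) (by linarith) (by linarith)) (by omega) (by linarith) hB.ge,
    .enterOne (L.update (by simp) (by simp) (by simp; omega)) (update_eq_of_ne (by simp) hS)
      (Function.update_self _ _ _) (by rw [counter_update_b]; omega)⟩

lemma hasForcedStep_enter_one (L : Landed n 1 σ) (B : IsValue n σ V) (hS : Skips n σ 1)
    (hleave : Leaves n σ 1) (hc : 2 ^ 1 + counter n σ 2 ≤ j) : HasForcedStep n j σ V := by
  have hn := L.succ_le
  have hA' := L.valA_succ B
  have hA := B.valA_of_skips le_rfl (by omega) hS
  have hB := B.valB_of_leaves le_rfl (by omega) hleave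
  refine ⟨BV.a 1, BV.b 1, forcedSwitch_enter le_rfl (by omega)
    (L.isOptimalAt_t_of_skips_one B hS) (by omega) (by linarith) (.inl hA.ge) (by linarith), ?_⟩
  set σ' := Function.update σ (BV.a 1) (BV.b 1) with hσ'
  have U : Landed n 1 σ' := L.update (by simp) (by simp; omega) (by simp)
  have hE : Enters σ' 1 := Function.update_self _ _ _
  refine .back ⟨le_rfl, hn, U.travel, hE, U.enters, fun k hk hkn => ?_⟩ ?_
  · rcases eq_or_ne k 1 with rfl | h1
    · exact .inl ⟨hE, .inr ⟨.inr (.inl U.enters), update_eq_of_ne (by simp) hleave⟩⟩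
    rcases eq_or_ne k (1 + 1) with rfl | h2
    · exact .inl ⟨U.enters, U.exit⟩
    · exact U.level k (by omega) hkn
  · rw [counter_eq_add (by omega), if_pos hE, counter_eq_add (by omega), if_pos U.enters, hσ',
      counter_update_a (by omega)]
    simp only [zero_add, pow_zero, Nat.reduceAdd]
    omega

end Landed

namespace ReturnPhase

lemma forcedSwitch (P : ReturnPhase n q σ) (B : IsValue n σ V) :
    ForcedSwitch n V BV.t (BV.a 1) := by
  have hq := P.one_le
  have hqn := P.succ_le
  have hA := B.valA_of_enters le_rfl (by omega) P.enters_one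
  have ht := B.travel hqn P.travel
  have hor : ∀ k, 1 < k → k ≤ n →
      valA n V k ≤ valB n V 1 ∨ valA n V k = V BV.t - 2 ^ k + 5 / 4 := fun k =>
    B.valA_le_valB_or_eq le_rfl (fun i hi => P.level i hi.le)
      ((P.level 1 le_rfl (by omega)).exitCoherent_of_enters P.enters_one)
  have hle : V BV.t ≤ valB n V 1 := by
    rcases hor (q + 1) (by omega) hqn with h | h
    · linarith
    · linarith [two_le_two_pow (i := q + 1) (by omega)]
  refine forcedSwitch_travel le_rfl (by omega) (by linarith) fun k hk hkn hne =>
    .inr ⟨?_, by omega⟩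
  rcases hor k (by omega) hkn with h | h
  · linarith
  · linarith [two_le_two_pow hk]

lemma phaseInvariant_update (P : ReturnPhase n q σ) (hc : counter n σ 0 ≤ j) :
    PhaseInvariant n j (Function.update σ BV.t (BV.a 1)) :=
  phaseInvariant_of_coherent (Function.update_self _ _ _) (update_eq_of_ne (by simp) P.enters_one)
    (fun i hi hin => (P.level i hi hin).congr (Function.update_of_ne (by simp) _ _)
      (Function.update_of_ne (by simp) _ _) (Function.update_of_ne (by simp) _ _))
    (by rwa [counter_update_t])

end ReturnPhase

lemma PhaseInvariant.finished_or_hasForcedStep (hn : 1 ≤ n) (B : IsValue n σ V)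
    (h : PhaseInvariant n j σ) : 2 ^ n ≤ j + 1 ∨ HasForcedStep n j σ V := by
  cases h with
  | finished h => exact .inl h
  | initial => exact .inr ⟨_, _, forcedSwitch_pi0 hn B, phaseInvariant_update_pi0 hn⟩
  | leave P hc =>
    exact .inr ⟨_, _, P.forcedSwitch B, .stay P.update (by rw [counter_update_b]; omega)⟩
  | stay P hc =>
    exact .inr ⟨_, _, P.forcedSwitch B, .enter P.update (by rw [counter_update_b]; omega)⟩
  | enter P hc =>
    refine .inr ⟨_, _, P.forcedSwitch B, .travel P.update ?_⟩
    rw [counter_update_a le_rfl, ← P.counter_add_one]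
    omega
  | travel P hc =>
    exact .inr ⟨_, _, P.forcedSwitch B, .board P.update (by rw [counter_update_t]; omega)⟩
  | board P hc => exact .inr (P.hasForcedStep B hc)
  | reset P hc => exact .inr (P.hasForcedStep B hc)
  | leaveOne P hS hs hc => exact .inr (P.hasForcedStep_leave_one B hS hs hc)
  | enterOne P hS hl hc => exact .inr (P.hasForcedStep_enter_one B hS hl hc)
  | back P hc => exact .inr ⟨_, _, P.forcedSwitch B, P.phaseInvariant_update (by omega)⟩

/-- An improving switch that a pivot rule processing the vertices in the order of `𝒩_V` may apply:
all vertices numbered below `v` are optimal, and `(v,w)` maximizes the reduced costs or minimizes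
the Bland number among the improving switches at `v`. -/
structure AdmissibleSwitch (n : ℕ) (V : BV → ℚ) (v w : BV) : Prop where
  edge : BEdge n v w
  pos : 0 < redCost n V v w
  low : ∀ u, IsBVertex n u → NV n u < NV n v → IsOptimalAt n V u
  choice : (∀ w', BEdge n v w' → redCost n V v w' ≤ redCost n V v w) ∨
    ∀ w', BEdge n v w' → 0 < redCost n V v w' → NB n v w ≤ NB n v w'

lemma ForcedSwitch.eq_of_admissible {v w v' w' : BV} (F : ForcedSwitch n V v w)
    (S : AdmissibleSwitch n V v' w') : v' = v ∧ w' = w := by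
  obtain rfl : v' = v := by
    refine NV_injOn n S.edge.isBVertex_left F.edge.isBVertex_left (le_antisymm ?_ ?_)
    · exact not_lt.1 fun h => F.pos.not_ge (S.low v F.edge.isBVertex_left h w F.edge)
    · exact not_lt.1 fun h => S.pos.not_ge (F.low v' S.edge.isBVertex_left h w' S.edge)
  refine ⟨rfl, not_not.1 fun hne => ?_⟩
  obtain ⟨hred, hNB⟩ := (F.others w' S.edge hne).resolve_left S.pos.not_ge
  rcases S.choice with h | h
  · exact hred.not_ge (h w F.edge)
  · exact hNB.not_ge (h w F.edge F.pos)

lemma PhaseInvariant.update (hn : 1 ≤ n) (B : IsValue n σ V) (h : PhaseInvariant n j σ) {v w : BV}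
    (S : AdmissibleSwitch n V v w) : PhaseInvariant n (j + 1) (Function.update σ v w) := by
  rcases h.finished_or_hasForcedStep hn B with h | ⟨v', w', F, hnext⟩
  · exact .finished (by omega)
  · obtain ⟨rfl, rfl⟩ := F.eq_of_admissible S
    exact hnext

lemma PhaseInvariant.two_pow_le_of_optimal (hn : 1 ≤ n) (B : IsValue n σ V)
    (h : PhaseInvariant n j σ) (hopt : ∀ u, IsOptimalAt n V u) : 2 ^ n ≤ j + 1 :=
  (h.finished_or_hasForcedStep hn B).resolve_right fun ⟨v, w, F, _⟩ =>
    F.pos.not_ge (hopt v w F.edge)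

end Phases

/-! ### Policies of `𝔇_n` -/

/-- The policy `π` for `𝔇_n` moves as `σ` in `𝔅_n`, and `X` is the set of edges of `𝔅_n` whose
gadget is open, i.e. whose vertex `x v w` leads to `y v w` instead of back to `v`. -/
structure Simulates (n : ℕ) (σ : BV → BV) (X : Set (BV × BV)) (π : DV → DV) : Prop where
  base : ∀ v, IsBVertex n v → v ≠ BV.s → π (DV.base v) = DV.x v (σ v)
  sink : π (DV.base BV.s) = DV.base BV.s
  opened : ∀ v w, DEdgePair n v w → (v, w) ∈ X → π (DV.x v w) = DV.y v w
  closed : ∀ v w, DEdgePair n v w → (v, w) ∉ X → π (DV.x v w) = DV.base v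
  exit : ∀ v w, DEdgePair n v w → π (DV.z v w) = DV.base w
  active_mem : ∀ v, IsBVertex n v → v ≠ BV.s → (v, σ v) ∈ X

open Classical in
/-- The value function for `𝔇_n` of a policy that simulates a policy for `𝔅_n` with value function
`V`, where `X` is the set of open gadgets. -/
noncomputable def gadgetValue (n : ℕ) (p : BV → ℚ) (X : Set (BV × BV)) (V : BV → ℚ) : DV → ℚ
  | DV.base v => if IsBVertex n v then V v else 0
  | DV.x v w =>
    if DEdgePair n v w then if (v, w) ∈ X then V v + p v * redCost n V v w else V v else 0
  | DV.y v w => if DEdgePair n v w then V v + p v * redCost n V v w else 0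
  | DV.z v w => if DEdgePair n v w then rB n v w + V w else 0

section GadgetValue

variable {n : ℕ} {p : BV → ℚ} {X : Set (BV × BV)} {V : BV → ℚ} {v w : BV}

lemma gadgetValue_base (h : IsBVertex n v) : gadgetValue n p X V (DV.base v) = V v := if_pos h

lemma gadgetValue_y (h : DEdgePair n v w) :
    gadgetValue n p X V (DV.y v w) = V v + p v * redCost n V v w := if_pos h

lemma gadgetValue_z (h : DEdgePair n v w) :
    gadgetValue n p X V (DV.z v w) = rB n v w + V w := if_pos h

lemma gadgetValue_opened (h : DEdgePair n v w) (hX : (v, w) ∈ X) :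
    gadgetValue n p X V (DV.x v w) = V v + p v * redCost n V v w :=
  (if_pos h).trans (if_pos hX)

lemma gadgetValue_closed (h : DEdgePair n v w) (hX : (v, w) ∉ X) :
    gadgetValue n p X V (DV.x v w) = V v :=
  (if_pos h).trans (if_neg hX)

lemma gadgetValue_of_not_isDVertex {u : DV} (h : ¬ IsDVertex n u) :
    gadgetValue n p X V u = 0 := by
  cases u <;> exact if_neg h

end GadgetValue

/-- The improving switches of a policy for `𝔇_n` that simulates a policy for `𝔅_n` with value
function `V`, where `X` is the set of open gadgets: those opening a gadget, those redirecting a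
vertex of `𝔅_n` into an open gadget, and those closing a gadget. -/
inductive GadgetSwitch (n : ℕ) (V : BV → ℚ) (X : Set (BV × BV)) : DV → DV → Prop
  | opening {v w : BV} (edge : DEdgePair n v w) (hX : (v, w) ∉ X) (hpos : 0 < redCost n V v w) :
    GadgetSwitch n V X (DV.x v w) (DV.y v w)
  | redirecting {v w : BV} (edge : DEdgePair n v w) (hX : (v, w) ∈ X)
    (hpos : 0 < redCost n V v w) : GadgetSwitch n V X (DV.base v) (DV.x v w)
  | closing {v w : BV} (edge : DEdgePair n v w) (hX : (v, w) ∈ X) (hneg : redCost n V v w < 0) :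
    GadgetSwitch n V X (DV.x v w) (DV.base v)

namespace Simulates

variable {n : ℕ} {p : BV → ℚ} {σ : BV → BV} {V : BV → ℚ} {X : Set (BV × BV)} {π : DV → DV}
  {v w : BV}

lemma isDVal_gadgetValue (D : Simulates n σ X π) (B : IsValue n σ V) :
    IsDVal n p π (gadgetValue n p X V) := by
  refine ⟨(gadgetValue_base (v := BV.s) trivial).trans B.sink, fun u hu => ?_, fun v w he => ?_⟩
  · cases u with
    | base v =>
      rcases eq_or_ne v BV.s with rfl | hs
      · simp [D.sink, rD]
      · have he : DEdgePair n v (σ v) := ⟨B.isPolicy v hu, hs⟩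
        rw [D.base v hu hs, gadgetValue_base hu, gadgetValue_opened he (D.active_mem v hu hs),
          B.redCost_policy hu]
        simp [rD]
    | x v w =>
      by_cases hX : (v, w) ∈ X
      · rw [D.opened v w hu hX, gadgetValue_opened hu hX, gadgetValue_y hu]
        simp [rD]
      · rw [D.closed v w hu hX, gadgetValue_closed hu hX, gadgetValue_base hu.1.isBVertex_left]
        simp [rD]
    | y v w => exact absurd hu id
    | z v w =>
      rw [D.exit v w hu, gadgetValue_z hu, gadgetValue_base hu.1.isBVertex_right]
      simp [rD]
  · rw [gadgetValue_y he, gadgetValue_z he, gadgetValue_base he.1.isBVertex_left, redCost]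
    ring

lemma isDVal_base (D : Simulates n σ X π) (B : IsValue n σ V) (hp : ∀ v, p v ≠ 0) {W : DV → ℚ}
    (hW : IsDVal n p π W) (hv : IsBVertex n v) : W (DV.base v) = V v := by
  obtain ⟨hsink, hbell, hrand⟩ := hW
  refine B.isWeakUnichain.induction B.isPolicy (P := fun v => W (DV.base v) = V v)
    (by rw [hsink, B.sink]) (fun v hv ih => ?_) hv
  rcases eq_or_ne v BV.s with rfl | hs
  · rw [hsink, B.sink]
  have he : DEdgePair n v (σ v) := ⟨B.isPolicy v hv, hs⟩
  have hbase := hbell (DV.base v) hv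
  have hx := hbell (DV.x v (σ v)) he
  have hz := hbell (DV.z v (σ v)) he
  rw [D.base v hv hs] at hbase
  rw [D.opened v _ he (D.active_mem v hv hs)] at hx
  rw [D.exit v _ he, ih] at hz
  simp only [rD, zero_add, if_true] at hbase hx hz
  have hloop : p v * (W (DV.base v) - W (DV.z v (σ v))) = 0 := by
    rw [hx, hrand v (σ v) he] at hbase
    linarith
  rw [B.bellman v hv, ← hz]
  exact sub_eq_zero.1 ((mul_eq_zero.1 hloop).resolve_left (hp v))

lemma isDVal_unique (D : Simulates n σ X π) (B : IsValue n σ V) (hp : ∀ v, p v ≠ 0) {W : DV → ℚ}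
    (hW : IsDVal n p π W) (h0 : ∀ u, ¬ IsDVertex n u → W u = 0) : W = gadgetValue n p X V := by
  have hbase : ∀ v, IsBVertex n v → W (DV.base v) = V v := fun v hv => D.isDVal_base B hp hW hv
  have hz : ∀ v w, DEdgePair n v w → W (DV.z v w) = rB n v w + V w := fun v w he => by
    simpa [D.exit v w he, hbase w he.1.isBVertex_right, rD] using hW.2.1 (DV.z v w) he
  have hy : ∀ v w, DEdgePair n v w → W (DV.y v w) = V v + p v * redCost n V v w :=
    fun v w he => by
      rw [hW.2.2 v w he, hz v w he, hbase v he.1.isBVertex_left, redCost]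
      ring
  funext u
  by_cases hu : IsDVertex n u
  · cases u with
    | base v => rw [hbase v hu, gadgetValue_base hu]
    | x v w =>
      rw [hW.2.1 (DV.x v w) hu]
      by_cases hX : (v, w) ∈ X
      · rw [D.opened v w hu hX, hy v w hu, gadgetValue_opened hu hX]
        simp [rD]
      · rw [D.closed v w hu hX, hbase v hu.1.isBVertex_left, gadgetValue_closed hu hX]
        simp [rD]
    | y v w => rw [hy v w hu, gadgetValue_y hu]
    | z v w => rw [hz v w hu, gadgetValue_z hu]
  · rw [h0 u hu, gadgetValue_of_not_isDVertex hu]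

lemma dVal_eq (D : Simulates n σ X π) (B : IsValue n σ V) (hp : ∀ v, p v ≠ 0) :
    DVal n p π = gadgetValue n p X V := by
  have hex : ∃! W : DV → ℚ, IsDVal n p π W ∧ ∀ u, ¬ IsDVertex n u → W u = 0 :=
    ⟨gadgetValue n p X V, ⟨D.isDVal_gadgetValue B, fun _ hu => gadgetValue_of_not_isDVertex hu⟩,
      fun W hW => D.isDVal_unique B hp hW.1 hW.2⟩
  rw [DVal, dif_pos hex]
  exact D.isDVal_unique B hp hex.exists.choose_spec.1 hex.exists.choose_spec.2

lemma zD_opening (D : Simulates n σ X π) (B : IsValue n σ V) (hp : ∀ v, p v ≠ 0)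
    (he : DEdgePair n v w) (hX : (v, w) ∉ X) :
    zD n p π (DV.x v w) (DV.y v w) = p v * redCost n V v w := by
  rw [zD, D.dVal_eq B hp, gadgetValue_y he, gadgetValue_closed he hX]
  simp [rD]

lemma zD_redirecting (D : Simulates n σ X π) (B : IsValue n σ V) (hp : ∀ v, p v ≠ 0)
    (he : DEdgePair n v w) (hX : (v, w) ∈ X) :
    zD n p π (DV.base v) (DV.x v w) = p v * redCost n V v w := by
  rw [zD, D.dVal_eq B hp, gadgetValue_base he.1.isBVertex_left, gadgetValue_opened he hX]
  simp [rD]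

lemma zD_closing (D : Simulates n σ X π) (B : IsValue n σ V) (hp : ∀ v, p v ≠ 0)
    (he : DEdgePair n v w) (hX : (v, w) ∈ X) :
    zD n p π (DV.x v w) (DV.base v) = -(p v * redCost n V v w) := by
  rw [zD, D.dVal_eq B hp, gadgetValue_base he.1.isBVertex_left, gadgetValue_opened he hX]
  simp [rD]

lemma zD_active (D : Simulates n σ X π) (B : IsValue n σ V) (hp : ∀ v, p v ≠ 0) {u : DV}
    (hu : IsDAgent n u) : zD n p π u (π u) = 0 := by
  rw [zD, D.dVal_eq B hp, (D.isDVal_gadgetValue B).2.1 u hu, sub_self]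

lemma dImproving_iff (D : Simulates n σ X π) (B : IsValue n σ V) (hp : ∀ v, 0 < p v) {u u' : DV} :
    DImproving n p π u u' ↔ GadgetSwitch n V X u u' := by
  have hp0 : ∀ v, p v ≠ 0 := fun v => (hp v).ne'
  constructor
  · rintro ⟨⟨v, w, he, ⟨rfl, rfl⟩ | ⟨rfl, rfl⟩ | ⟨rfl, rfl⟩ | ⟨rfl, rfl⟩⟩ | ⟨rfl, rfl⟩, hz⟩
    · have hX : (v, w) ∈ X := by
        by_contra hX
        rw [zD, D.dVal_eq B hp0, gadgetValue_base he.1.isBVertex_left,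
          gadgetValue_closed he hX] at hz
        simp [rD] at hz
      rw [D.zD_redirecting B hp0 he hX] at hz
      exact .redirecting he hX (pos_of_mul_pos_right hz (hp v).le)
    · have hX : (v, w) ∈ X := by
        by_contra hX
        rw [← D.closed v w he hX, D.zD_active B hp0 (u := DV.x v w) he] at hz
        exact hz.false
      rw [D.zD_closing B hp0 he hX, ← mul_neg] at hz
      exact .closing he hX (neg_pos.1 (pos_of_mul_pos_right hz (hp v).le))
    · have hX : (v, w) ∉ X := by
        intro hX
        rw [← D.opened v w he hX, D.zD_active B hp0 (u := DV.x v w) he] at hz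
        exact hz.false
      rw [D.zD_opening B hp0 he hX] at hz
      exact .opening he hX (pos_of_mul_pos_right hz (hp v).le)
    · rw [← D.exit v w he, D.zD_active B hp0 (u := DV.z v w) he] at hz
      exact hz.false.elim
    · simp [zD, rD] at hz
  · rintro (⟨he, hX, hpos⟩ | ⟨he, hX, hpos⟩ | ⟨he, hX, hneg⟩)
    · refine ⟨.inl ⟨_, _, he, .inr (.inr (.inl ⟨rfl, rfl⟩))⟩, ?_⟩
      rw [D.zD_opening B hp0 he hX]
      exact mul_pos (hp _) hpos
    · refine ⟨.inl ⟨_, _, he, .inl ⟨rfl, rfl⟩⟩, ?_⟩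
      rw [D.zD_redirecting B hp0 he hX]
      exact mul_pos (hp _) hpos
    · refine ⟨.inl ⟨_, _, he, .inr (.inl ⟨rfl, rfl⟩)⟩, ?_⟩
      rw [D.zD_closing B hp0 he hX, ← mul_neg]
      exact mul_pos (hp _) (neg_pos.2 hneg)

lemma exists_dImproving (D : Simulates n σ X π) (B : IsValue n σ V) (hp : ∀ v, 0 < p v)
    (he : BEdge n v w) (hpos : 0 < redCost n V v w) : ∃ u u', DImproving n p π u u' ∧
      zD n p π u u' = p v * redCost n V v w ∧
      (u = DV.x v w ∧ u' = DV.y v w ∨ u = DV.base v ∧ u' = DV.x v w) := by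
  have he' : DEdgePair n v w := ⟨he, ne_sink_of_redCost_pos he hpos⟩
  by_cases hX : (v, w) ∈ X
  · exact ⟨_, _, (D.dImproving_iff B hp).2 (.redirecting he' hX hpos),
      D.zD_redirecting B (fun v => (hp v).ne') he' hX, .inr ⟨rfl, rfl⟩⟩
  · exact ⟨_, _, (D.dImproving_iff B hp).2 (.opening he' hX hpos),
      D.zD_opening B (fun v => (hp v).ne') he' hX, .inl ⟨rfl, rfl⟩⟩

lemma openGadget (D : Simulates n σ X π) (v w : BV) :
    Simulates n σ (insert (v, w) X) (Function.update π (DV.x v w) (DV.y v w)) where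
  base a ha hs := by rw [Function.update_of_ne (by simp), D.base a ha hs]
  sink := by rw [Function.update_of_ne (by simp), D.sink]
  opened a b he hX := by
    rcases Set.mem_insert_iff.1 hX with h | h
    · obtain ⟨rfl, rfl⟩ := Prod.mk.inj h
      rw [Function.update_self]
    · by_cases hab : DV.x a b = DV.x v w
      · obtain ⟨rfl, rfl⟩ := DV.x.inj hab
        rw [Function.update_self]
      · rw [Function.update_of_ne hab, D.opened a b he h]
  closed a b he hX := by
    obtain ⟨hne, hX⟩ := not_or.1 (mt Set.mem_insert_iff.2 hX)
    rw [Function.update_of_ne (by simpa using hne), D.closed a b he hX]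
  exit a b he := by rw [Function.update_of_ne (by simp), D.exit a b he]
  active_mem a ha hs := .inr (D.active_mem a ha hs)

lemma closeGadget (D : Simulates n σ X π) (hw : w ≠ σ v) :
    Simulates n σ (X \ {(v, w)}) (Function.update π (DV.x v w) (DV.base v)) where
  base a ha hs := by rw [Function.update_of_ne (by simp), D.base a ha hs]
  sink := by rw [Function.update_of_ne (by simp), D.sink]
  opened a b he hX := by
    rw [Function.update_of_ne (by simpa using hX.2), D.opened a b he hX.1]
  closed a b he hX := by
    by_cases hab : DV.x a b = DV.x v w
    · obtain ⟨rfl, rfl⟩ := DV.x.inj hab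
      rw [Function.update_self]
    · rw [Function.update_of_ne hab, D.closed a b he fun h => hX ⟨h, by simpa using hab⟩]
  exit a b he := by rw [Function.update_of_ne (by simp), D.exit a b he]
  active_mem a ha hs := by
    refine ⟨D.active_mem a ha hs, fun h => hw ?_⟩
    obtain ⟨rfl, rfl⟩ := Prod.mk.inj h
    rfl

lemma redirect (D : Simulates n σ X π) (hs : v ≠ BV.s) (hX : (v, w) ∈ X) :
    Simulates n (Function.update σ v w) X (Function.update π (DV.base v) (DV.x v w)) where
  base a ha has := by
    rcases eq_or_ne a v with rfl | hav
    · rw [Function.update_self, Function.update_self]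
    · rw [Function.update_of_ne (by simpa using hav), Function.update_of_ne hav, D.base a ha has]
  sink := by rw [Function.update_of_ne (by simpa using hs.symm), D.sink]
  opened a b he hab := by rw [Function.update_of_ne (by simp), D.opened a b he hab]
  closed a b he hab := by rw [Function.update_of_ne (by simp), D.closed a b he hab]
  exit a b he := by rw [Function.update_of_ne (by simp), D.exit a b he]
  active_mem a ha has := by
    rcases eq_or_ne a v with rfl | hav
    · rwa [Function.update_self]
    · rw [Function.update_of_ne hav]
      exact D.active_mem a ha has

end Simulates

lemma simulates_twin (n : ℕ) (σ : BV → BV) : Simulates n σ {e | e.2 = σ e.1} (twin σ) where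
  base _ _ hs := if_neg hs
  sink := rfl
  opened _ _ _ h := if_pos h
  closed _ _ _ h := if_neg h
  exit _ _ _ := rfl
  active_mem _ _ _ := rfl

section InitialPolicy

variable {n i : ℕ}

lemma isBPolicy_pi0 (hn : 1 ≤ n) : IsBPolicy n (pi0 n) := by
  intro u hu
  cases u with
  | t => exact .travel le_rfl hn
  | s => exact bEdge_s_iff.2 rfl
  | d => exact bEdge_d_iff.2 rfl
  | a i => exact .skip hu.1 hu.2
  | b i => exact .leave hu.1 hu.2

lemma visits_sink_pi0_aN (h : i ≤ n + 1) : Visits (pi0 n) BV.s (aN n i) := by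
  induction h using Nat.decreasingInduction with
  | self => rw [aN_top]; exact .refl _ _
  | of_succ i hi ih =>
    rw [aN_of_le (by omega), visits_iff_of_ne (by simp)]
    exact ih

lemma bWeakUnichain_pi0 (hn : 1 ≤ n) : BWeakUnichain n (pi0 n) := by
  intro u hu
  change Visits (pi0 n) BV.s u
  cases u with
  | t =>
    rw [visits_iff_of_ne (by simp), show pi0 n BV.t = aN n 1 from (aN_of_le hn).symm]
    exact visits_sink_pi0_aN (by omega)
  | s => exact .refl _ _
  | d => exact ⟨1, rfl⟩
  | a i =>
    rw [visits_iff_of_ne (by simp)]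
    exact visits_sink_pi0_aN (Nat.succ_le_succ hu.2)
  | b i =>
    rw [visits_iff_of_ne (by simp)]
    exact visits_sink_pi0_aN (Nat.succ_le_succ hu.2)

lemma isValue_pi0 (hn : 1 ≤ n) : IsValue n (pi0 n) 0 where
  isPolicy := isBPolicy_pi0 hn
  isWeakUnichain := bWeakUnichain_pi0 hn
  sink := rfl
  bellman u hu := by
    rw [Pi.zero_apply, Pi.zero_apply, add_zero]
    cases u with
    | t => rfl
    | s => rfl
    | d => rfl
    | a i => exact (rB_skip n i (i + 1)).symm
    | b i => exact (rB_leave n i (i + 1)).symm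
  nonneg _ _ := le_rfl

end InitialPolicy

/-! ### Vertices with small numbers dominate -/

/-- The least number of an edge that leaves a given vertex of `𝔅_n` in the Bland numbering of
`𝔅_n`, up to a lower bound at `t`. -/
def minNB (n : ℕ) : BV → ℕ
  | BV.t => 0
  | BV.a i => n + 1 + 5 * (i - 1)
  | BV.b i => n + 4 + 5 * (i - 1)
  | BV.d => 6 * n + 1
  | BV.s => 6 * n + 2

/-- The greatest number of an edge that leaves a given vertex of `𝔅_n` in the Bland numbering of
`𝔅_n`. -/
def maxNB (n : ℕ) : BV → ℕ
  | BV.t => n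
  | BV.a i => n + 3 + 5 * (i - 1)
  | BV.b i => n + 5 + 5 * (i - 1)
  | BV.d => 6 * n + 1
  | BV.s => 6 * n + 2

section Domination

variable {n : ℕ} {σ : BV → BV} {V : BV → ℚ} {u u' v v' w : BV}

lemma NB_skip (n i j : ℕ) : NB n (BV.a i) (aN n j) = n + 2 + 5 * (i - 1) := by
  unfold aN; split_ifs <;> rfl

lemma NB_stay (n i j : ℕ) : NB n (BV.b i) (bN n j) = n + 4 + 5 * (i - 1) := by
  unfold bN; split_ifs <;> rfl

lemma NB_leave (n i j : ℕ) : NB n (BV.b i) (aN n j) = n + 5 + 5 * (i - 1) := by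
  unfold aN; split_ifs <;> rfl

lemma NB_mem_Icc (h : BEdge n v w) : NB n v w ∈ Set.Icc (minNB n v) (maxNB n v) := by
  induction h using BEdge.casesKind with
  | travel i _ hin => exact ⟨Nat.zero_le _, hin⟩
  | enter i => exact ⟨le_rfl, by simp only [NB, maxNB]; omega⟩
  | skip i => rw [NB_skip]; constructor <;> simp only [minNB, maxNB] <;> omega
  | board i => exact ⟨by simp only [NB, minNB]; omega, le_rfl⟩
  | stay i => rw [NB_stay]; exact ⟨le_rfl, by simp only [maxNB]; omega⟩
  | leave i => rw [NB_leave]; exact ⟨by simp only [minNB]; omega, le_rfl⟩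
  | dummy => exact ⟨le_rfl, le_rfl⟩
  | sink => exact ⟨le_rfl, le_rfl⟩

lemma maxNB_lt_minNB (hu : IsBVertex n u) (hv : IsBVertex n v) (h : NV n u < NV n v) :
    maxNB n u < minNB n v := by
  cases u <;> cases v <;> simp only [NV, minNB, maxNB, IsBVertex] at * <;> omega

lemma NB_lt_NB (hu : BEdge n u u') (hv : BEdge n v v') (h : NV n u < NV n v) :
    NB n u u' < NB n v v' :=
  (NB_mem_Icc hu).2.trans_lt
    ((maxNB_lt_minNB hu.isBVertex_left hv.isBVertex_left h).trans_le (NB_mem_Icc hv).1)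

lemma pSpec_pos (n : ℕ) (v : BV) : 0 < pSpec n v := zpow_pos two_pos _

lemma pSpec_ne_zero (n : ℕ) (v : BV) : pSpec n v ≠ 0 := (pSpec_pos n v).ne'

lemma pSpec_eq_inv_pow (n : ℕ) (v : BV) : pSpec n v = ((2 : ℚ) ^ (NV n v * (n + 5)))⁻¹ := by
  rw [pSpec, zpow_neg, zpow_natCast]

lemma pSpec_mul_le_pSpec (h : NV n u < NV n v) : pSpec n v * 2 ^ (n + 5) ≤ pSpec n u := by
  have hexp : NV n u * (n + 5) + (n + 5) ≤ NV n v * (n + 5) := by nlinarith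
  rw [pSpec_eq_inv_pow, pSpec_eq_inv_pow, ← div_eq_inv_mul, div_le_iff₀ (by positivity),
    ← div_eq_inv_mul, le_div_iff₀ (by positivity), ← pow_add, add_comm]
  exact pow_le_pow_right₀ one_le_two hexp

lemma pSpec_mul_le_one (h : 1 ≤ NV n v) : pSpec n v * 2 ^ (n + 5) ≤ 1 := by
  rw [pSpec_eq_inv_pow, ← div_eq_inv_mul, div_le_one (by positivity)]
  exact pow_le_pow_right₀ one_le_two (Nat.le_mul_of_pos_left _ h)

lemma one_le_NV (h : IsBVertex n v) : 1 ≤ NV n v := by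
  cases v <;> simp only [NV, IsBVertex] at * <;> omega

lemma pSpec_le_one (h : IsBVertex n v) : pSpec n v ≤ 1 :=
  (le_mul_of_one_le_right (pSpec_pos n v).le (one_le_pow₀ one_le_two)).trans
    (pSpec_mul_le_one (one_le_NV h))

lemma IsValue.pSpec_mul_abs_redCost_lt (B : IsValue n σ V) (h : BEdge n v w) {q : ℚ}
    (hq : pSpec n v * 2 ^ (n + 5) ≤ q) : pSpec n v * |redCost n V v w| < q * (1 / 4) := by
  have hle : pSpec n v * |redCost n V v w| ≤ pSpec n v * 2 ^ (n + 2) :=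
    mul_le_mul_of_nonneg_left (B.abs_redCost_le h) (pSpec_pos n v).le
  have hpos : 0 < pSpec n v * 2 ^ (n + 2) := mul_pos (pSpec_pos n v) (by positivity)
  rw [show (2 : ℚ) ^ (n + 5) = 8 * 2 ^ (n + 2) by ring] at hq
  linarith

lemma IsValue.pSpec_mul_abs_redCost_lt_of_NV_lt (B : IsValue n σ V) (hu : BEdge n u u')
    (hne : redCost n V u u' ≠ 0) (hv : BEdge n v v') (h : NV n u < NV n v) :
    pSpec n v * |redCost n V v v'| < pSpec n u * |redCost n V u u'| :=
  (B.pSpec_mul_abs_redCost_lt hv (pSpec_mul_le_pSpec h)).trans_le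
    (mul_le_mul_of_nonneg_left (B.quarter_le_abs_redCost hu hne) (pSpec_pos n u).le)

lemma IsValue.pSpec_mul_abs_redCost_lt_quarter (B : IsValue n σ V) (h : BEdge n v w) :
    pSpec n v * |redCost n V v w| < 1 / 4 := by
  simpa using B.pSpec_mul_abs_redCost_lt h (pSpec_mul_le_one (one_le_NV h.isBVertex_left))

/-- An improving switch at the first vertex of `𝔅_n`, in the order of the vertex numbering, that
has an improving switch, and with maximal reduced costs among the edges leaving this vertex. -/
structure DominantSwitch (n : ℕ) (V : BV → ℚ) (v w : BV) : Prop where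
  edge : BEdge n v w
  pos : 0 < redCost n V v w
  low : ∀ u, IsBVertex n u → NV n u < NV n v → IsOptimalAt n V u
  best : ∀ w', BEdge n v w' → redCost n V v w' ≤ redCost n V v w

lemma DominantSwitch.admissible (S : DominantSwitch n V v w) : AdmissibleSwitch n V v w :=
  ⟨S.edge, S.pos, S.low, .inl S.best⟩

lemma IsValue.dominantSwitch_of_forall_pSpec_mul_le (B : IsValue n σ V) (he : BEdge n v w)
    (hpos : 0 < redCost n V v w)
    (hmax : ∀ v' w', BEdge n v' w' → 0 < redCost n V v' w' →
      pSpec n v' * redCost n V v' w' ≤ pSpec n v * redCost n V v w) :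
    DominantSwitch n V v w where
  edge := he
  pos := hpos
  low u _ hlt u' hu := by
    by_contra! hu'
    have := B.pSpec_mul_abs_redCost_lt_of_NV_lt hu hu'.ne' he hlt
    rw [abs_of_pos hpos, abs_of_pos hu'] at this
    exact this.not_ge (hmax u u' hu hu')
  best w' he' := by
    rcases le_or_gt (redCost n V v w') 0 with h | h
    · exact h.trans hpos.le
    · exact le_of_mul_le_mul_left (hmax v w' he' h) (pSpec_pos n v)

end Domination

/-! ### Bland's and Dantzig's rule on `𝔇_n` -/

/-- The state after `k` steps on `𝔇_n`: the policy `π` simulates the policy `σ` for `𝔅_n`, and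
`σ` has been reached by at most `k` steps of the run on `𝔅_n`. -/
structure Tracks (n k : ℕ) (σ : BV → BV) (V : BV → ℚ) (X : Set (BV × BV)) (π : DV → DV) :
    Prop where
  sim : Simulates n σ X π
  value : IsValue n σ V
  phase : ∃ j ≤ k, PhaseInvariant n j σ

section Tracks

variable {n k : ℕ} {σ : BV → BV} {V : BV → ℚ} {X : Set (BV × BV)} {π : DV → DV} {v w : BV}

lemma tracks_twin_pi0 (hn : 1 ≤ n) :
    Tracks n 0 (pi0 n) 0 {e | e.2 = pi0 n e.1} (twin (pi0 n)) :=
  ⟨simulates_twin n _, isValue_pi0 hn, 0, le_rfl, .initial⟩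

lemma Tracks.openGadget (T : Tracks n k σ V X π) (v w : BV) :
    Tracks n (k + 1) σ V (insert (v, w) X) (Function.update π (DV.x v w) (DV.y v w)) := by
  obtain ⟨j, hj, hI⟩ := T.phase
  exact ⟨T.sim.openGadget v w, T.value, j, by omega, hI⟩

lemma Tracks.closeGadget (T : Tracks n k σ V X π) (hw : w ≠ σ v) :
    Tracks n (k + 1) σ V (X \ {(v, w)}) (Function.update π (DV.x v w) (DV.base v)) := by
  obtain ⟨j, hj, hI⟩ := T.phase
  exact ⟨T.sim.closeGadget hw, T.value, j, by omega, hI⟩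

lemma Tracks.redirect (hn : 1 ≤ n) (T : Tracks n k σ V X π) (hX : (v, w) ∈ X)
    (S : AdmissibleSwitch n V v w) :
    Tracks n (k + 1) (Function.update σ v w) (switchValue n σ V v w) X
      (Function.update π (DV.base v) (DV.x v w)) := by
  obtain ⟨j, hj, hI⟩ := T.phase
  exact ⟨T.sim.redirect (ne_sink_of_redCost_pos S.edge S.pos) hX, T.value.update S.edge S.pos,
    j + 1, by omega, hI.update hn T.value S⟩

lemma IsValue.ne_policy_of_redCost_ne_zero (B : IsValue n σ V) (hv : IsBVertex n v)
    (h : redCost n V v w ≠ 0) : w ≠ σ v := by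
  rintro rfl
  exact h (B.redCost_policy hv)

lemma Tracks.exists_tracks_update (hn : 1 ≤ n) (T : Tracks n k σ V X π) {u u' : DV}
    (h : DImproving n (pSpec n) π u u')
    (hadm : ∀ v w, u = DV.base v → u' = DV.x v w → BEdge n v w → 0 < redCost n V v w →
      AdmissibleSwitch n V v w) :
    ∃ σ' V' X', Tracks n (k + 1) σ' V' X' (Function.update π u u') := by
  rcases (T.sim.dImproving_iff T.value (pSpec_pos n)).1 h with
    ⟨he, hX, hpos⟩ | ⟨he, hX, hpos⟩ | ⟨he, hX, hneg⟩
  · exact ⟨_, _, _, T.openGadget _ _⟩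
  · exact ⟨_, _, _, T.redirect hn hX (hadm _ _ rfl rfl he.1 hpos)⟩
  · exact ⟨_, _, _, T.closeGadget
      (T.value.ne_policy_of_redCost_ne_zero he.1.isBVertex_left hneg.ne)⟩

lemma Tracks.two_pow_sub_one_le (hn : 1 ≤ n) (T : Tracks n k σ V X π)
    (ht : ∀ u u', ¬ DImproving n (pSpec n) π u u') : 2 ^ n - 1 ≤ k := by
  obtain ⟨j, hj, hI⟩ := T.phase
  have hopt : ∀ u, IsOptimalAt n V u := by
    intro u w he
    by_contra! hpos
    obtain ⟨x, x', himp, -⟩ := T.sim.exists_dImproving T.value (pSpec_pos n) he hpos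
    exact ht x x' himp
  have := hI.two_pow_le_of_optimal hn T.value hopt
  omega

lemma two_pow_sub_one_le_of_run (hn : 1 ≤ n) {K : ℕ → (DV → DV) → Prop}
    {R : (DV → DV) → (DV → DV) → Prop} (start : K 0 (twin (pi0 n)))
    (step : ∀ k π π', K k π → R π π' → K (k + 1) π')
    (tracks : ∀ k π, K k π → ∃ σ V X, Tracks n k σ V X π) (f : ℕ → DV → DV) (m : ℕ)
    (h0 : f 0 = twin (pi0 n)) (hf : ∀ k < m, R (f k) (f (k + 1)))
    (ht : ∀ u u', ¬ DImproving n (pSpec n) (f m) u u') : 2 ^ n - 1 ≤ m := by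
  have hK : ∀ k ≤ m, K k (f k) := by
    intro k
    induction k with
    | zero => intro _; rwa [h0]
    | succ k ih => exact fun hk => step k _ _ (ih (by omega)) (hf k (by omega))
  obtain ⟨σ, V, X, T⟩ := tracks m _ (hK m le_rfl)
  exact T.two_pow_sub_one_le hn ht

lemma Tracks.exists_tracks_of_isBlandStepD (hn : 1 ≤ n) (T : Tracks n k σ V X π)
    {N : DV → DV → ℕ} (hN : IsDBlandNumbering n N) {π' : DV → DV}
    (h : IsBlandStepD n (pSpec n) N π π') : ∃ σ' V' X', Tracks n (k + 1) σ' V' X' π' := by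
  obtain ⟨u, u', himp, hmin, rfl⟩ := h
  obtain ⟨-, -, hgadget, hblock, -⟩ := hN
  refine T.exists_tracks_update hn himp ?_
  rintro v w rfl rfl he hpos
  have hvw : DEdgePair n v w := ⟨he, ne_sink_of_redCost_pos he hpos⟩
  have hNB : ∀ v' w', BEdge n v' w' → 0 < redCost n V v' w' → NB n v w ≤ NB n v' w' := by
    intro v' w' he' hpos'
    have hvw' : DEdgePair n v' w' := ⟨he', ne_sink_of_redCost_pos he' hpos'⟩
    by_contra! hlt
    have hblock' := hblock v' w' v w hvw' hvw hlt
    have := hgadget v w hvw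
    have := hgadget v' w' hvw'
    obtain ⟨x, x', himp', -, ⟨rfl, rfl⟩ | ⟨rfl, rfl⟩⟩ :=
      T.sim.exists_dImproving T.value (pSpec_pos n) he' hpos'
    all_goals
      have := hmin _ _ himp'
      omega
  refine ⟨he, hpos, fun u _ hlt u' hu => ?_, .inr fun w' => hNB v w'⟩
  by_contra! hu'
  exact (NB_lt_NB hu he hlt).not_ge (hNB u u' hu hu')

lemma Tracks.exists_tracks_of_dantzigStep (hn : 1 ≤ n) (T : Tracks n k σ V X π)
    {π' : DV → DV} (h : DantzigStep n (pSpec n) π π') :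
    ∃ σ' V' X', Tracks n (k + 1) σ' V' X' π' := by
  obtain ⟨u, u', himp, hmax, rfl⟩ := h
  refine T.exists_tracks_update hn himp ?_
  rintro v w rfl rfl he hpos
  have hX : (v, w) ∈ X := by
    cases (T.sim.dImproving_iff T.value (pSpec_pos n)).1 himp with
    | redirecting _ hX _ => exact hX
  suffices h : ∀ v' w', BEdge n v' w' → 0 < redCost n V v' w' →
      pSpec n v' * redCost n V v' w' ≤ pSpec n v * redCost n V v w from
    (T.value.dominantSwitch_of_forall_pSpec_mul_le he hpos h).admissible
  intro v' w' he' hpos'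
  obtain ⟨x, x', himp', hz, -⟩ := T.sim.exists_dImproving T.value (pSpec_pos n) he' hpos'
  rw [← hz, ← T.sim.zD_redirecting T.value (pSpec_ne_zero n)
    ⟨he, ne_sink_of_redCost_pos he hpos⟩ hX]
  exact hmax x x' himp'

end Tracks

/-! ### Settled vertices -/

/-- The vertex `v` has no improving switch, and no edge from `t` to a vertex after `v` is an
improving switch. With the largest increase rule, gadgets that are waiting to be closed belong to
vertices of this kind, and such gadgets never become attractive again. -/
def IsSettled (n : ℕ) (V : BV → ℚ) (v : BV) : Prop :=
  IsOptimalAt n V v ∧ ∀ k, 1 ≤ k → k ≤ n → NV n v < 2 * k → V (BV.a k) ≤ V BV.t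

section Jumps

variable {n i : ℕ} {q q' v : BV}

lemma NV_le (h : IsBVertex n v) : NV n v ≤ 2 * n + 3 := by
  cases v <;> simp only [NV, IsBVertex] at * <;> omega

lemma two_mul_le_NV_aN (n i : ℕ) : 2 * i ≤ NV n (aN n i) := by
  unfold aN; split_ifs <;> simp only [NV] <;> omega

lemma two_mul_le_NV_bN (n i : ℕ) : 2 * i ≤ NV n (bN n i) := by
  unfold bN; split_ifs <;> simp only [NV] <;> omega

lemma BEdge.eq_t_or_NV_lt (h : BEdge n q q') (hs : q ≠ BV.s) :
    q' = BV.t ∧ rB n q q' = -potential n q - 3 / 4 ∨ NV n q < NV n q' := by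
  induction h using BEdge.casesKind with
  | travel i hi => right; simp only [NV]; omega
  | enter i => right; exact Nat.lt_succ_self _
  | skip i => right; exact (two_mul_le_NV_aN n (i + 1)).trans_lt' (by simp only [NV]; omega)
  | board i => left; exact ⟨rfl, by rw [rB_board, potential]; ring⟩
  | stay i => right; exact (two_mul_le_NV_bN n (i + 1)).trans_lt' (by simp only [NV]; omega)
  | leave i => right; exact (two_mul_le_NV_aN n (i + 1)).trans_lt' (by simp only [NV]; omega)
  | dummy => right; exact Nat.lt_succ_self _
  | sink => exact absurd rfl hs

lemma eq_of_NV_lt_NV_aN (hv : IsBVertex n v) (hi : 1 ≤ i) (hin : i ≤ n) (h : 2 * i < NV n v)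
    (h' : NV n v < NV n (aN n (i + 1))) : v = BV.b i ∨ v = BV.d ∧ i = n := by
  unfold aN at h'
  split_ifs at h' <;> cases v <;>
    simp only [NV, IsBVertex, BV.b.injEq, reduceCtorEq, false_and, or_false, false_or,
      true_and] at * <;> omega

lemma eq_of_NV_lt_NV_bN (hv : IsBVertex n v) (hin : i ≤ n) (h : 2 * i + 1 < NV n v)
    (h' : NV n v < NV n (bN n (i + 1))) : v = BV.a (i + 1) := by
  unfold bN at h'
  split_ifs at h' <;> cases v <;> simp only [NV, IsBVertex, BV.a.injEq, reduceCtorEq] at * <;> omega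

/-- Edges only jump over vertices from which their head can be reached as well, at no smaller
reward. -/
lemma BEdge.of_NV_lt_of_NV_lt (h : BEdge n q q') (hq : q ≠ BV.t) (hv : IsBVertex n v)
    (hlo : NV n q < NV n v) (hhi : NV n v < NV n q') :
    BEdge n v q' ∧ rB n q q' ≤ rB n v q' + potential n v - potential n q := by
  induction h using BEdge.casesKind with
  | travel => exact absurd rfl hq
  | enter i => simp only [NV] at hlo hhi; omega
  | skip i hi hin =>
    have := two_le_two_pow hi
    rcases eq_of_NV_lt_NV_aN hv hi hin hlo hhi with rfl | ⟨rfl, rfl⟩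
    · refine ⟨.leave hi hin, ?_⟩
      simp only [rB_skip, rB_leave, potential, pow_succ]; linarith
    · rw [aN_top]
      refine ⟨bEdge_d_iff.2 rfl, ?_⟩
      simp only [rB, potential, pow_succ]; linarith
  | board i => simp only [NV] at hlo hhi; omega
  | stay i hi hin =>
    obtain rfl := eq_of_NV_lt_NV_bN hv hin hlo hhi
    have hin' : i + 1 ≤ n := hv.2
    have := two_le_two_pow hi
    rw [rB_stay, bN_of_le hin']
    refine ⟨.enter (by omega) hin', ?_⟩
    simp only [rB_enter, potential, pow_succ]; linarith
  | leave i hi hin =>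
    obtain rfl | ⟨rfl, rfl⟩ := eq_of_NV_lt_NV_aN hv hi hin (Nat.lt_of_succ_lt hlo) hhi
    · exact absurd hlo (lt_irrefl _)
    · rw [aN_top]
      refine ⟨bEdge_d_iff.2 rfl, ?_⟩
      simp only [rB, potential]; linarith
  | dummy => simp only [NV] at hlo hhi; omega
  | sink => exact absurd (hlo.trans hhi) (lt_irrefl _)

end Jumps

section Settled

variable {n : ℕ} {σ : BV → BV} {V : BV → ℚ} {q u v w : BV}

lemma le_switchValue (hpos : 0 < redCost n V u w) (q : BV) : V q ≤ switchValue n σ V u w q := by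
  unfold switchValue
  split_ifs <;> linarith

namespace IsValue

lemma visits_t_of_visits (B : IsValue n σ V) (hq : IsBVertex n q) (h : NV n u < NV n q)
    (hvis : Visits σ u q) : Visits σ u BV.t ∧ V q ≤ V BV.t - potential n q - 3 / 4 := by
  obtain ⟨k, hk⟩ := hvis
  induction k generalizing q with
  | zero => obtain rfl : q = u := hk; exact absurd h (lt_irrefl _)
  | succ k ih =>
    have hs : q ≠ BV.s := by
      rintro rfl
      obtain rfl := Visits.eq_sink B.policy_sink ⟨k + 1, hk⟩
      exact lt_irrefl _ h
    have hb := B.bellman q hq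
    have he := B.isPolicy q hq
    rcases he.eq_t_or_NV_lt hs with ⟨ht, hr⟩ | hlt
    · rw [hr, ht] at hb
      exact ⟨⟨k, ht ▸ hk⟩, by linarith⟩
    · obtain ⟨hvt, hle⟩ := ih he.isBVertex_right (h.trans hlt) hk
      exact ⟨hvt, by linarith [rB_le_potential_sub he]⟩

/-- Beyond `u`, a switch at `u` only changes the values of vertices whose path boards `t`. -/
lemma switchValue_eq_or_of_NV_lt (B : IsValue n σ V) (w : BV) (hq : IsBVertex n q)
    (h : NV n u < NV n q) :
    switchValue n σ V u w q = V q ∨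
      switchValue n σ V u w q - V q = switchValue n σ V u w BV.t - V BV.t ∧
        switchValue n σ V u w q ≤ switchValue n σ V u w BV.t - potential n q - 3 / 4 := by
  by_cases hvis : Visits σ u q
  · obtain ⟨ht, hle⟩ := B.visits_t_of_visits hq h hvis
    right
    rw [switchValue_of_visits w hvis, switchValue_of_visits w ht]
    constructor <;> linarith
  · exact .inl (switchValue_of_not_visits w hvis)

lemma switchValue_le_of_isOptimalAt (B : IsValue n σ V) (he : BEdge n u w)
    (hpos : 0 < redCost n V u w) (hv : IsBVertex n v) (huv : NV n u < NV n v)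
    (hopt : IsOptimalAt n V v) (hq : IsBVertex n q) (hqv : NV n q ≤ NV n v) (hqt : q ≠ BV.t) :
    switchValue n σ V u w q ≤ potential n v - potential n q + switchValue n σ V u w v ∨
      switchValue n σ V u w q ≤ switchValue n σ V u w BV.t - potential n q - 3 / 4 := by
  have B' := B.update he hpos
  revert hqv hqt
  refine B'.isWeakUnichain.induction B'.isPolicy (P := fun q => NV n q ≤ NV n v → q ≠ BV.t →
    (switchValue n σ V u w q ≤ potential n v - potential n q + switchValue n σ V u w v ∨
      switchValue n σ V u w q ≤ switchValue n σ V u w BV.t - potential n q - 3 / 4))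
    (fun hsv _ => ?_) (fun q hq ih hqv hqt => ?_) hq
  · obtain rfl : BV.s = v := NV_injOn n (show IsBVertex n BV.s from trivial) hv
      (le_antisymm hsv (NV_le hv))
    left; linarith
  rcases hqv.eq_or_lt with hNV | hlt
  · obtain rfl := NV_injOn n hq hv hNV
    left; linarith
  have hb := B'.bellman q hq
  have he' := B'.isPolicy q hq
  have hqs : q ≠ BV.s := by rintro rfl; exact hlt.not_ge (NV_le hv)
  generalize Function.update σ u w q = q' at ih hb he'
  rcases he'.eq_t_or_NV_lt hqs with ⟨rfl, hr⟩ | hlt'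
  · right; linarith
  have hr := rB_le_potential_sub he'
  rcases le_or_gt (NV n q') (NV n v) with hle | hgt
  · have hq't : q' ≠ BV.t := by rintro rfl; exact not_NV_lt_NV_t hq hlt'
    rcases ih hle hq't with h | h
    · left; linarith
    · right; linarith
  · obtain ⟨hvq', hjump⟩ := he'.of_NV_lt_of_NV_lt hqt hv hlt hgt
    have hred : redCost n V v q' ≤ 0 := hopt q' hvq'
    have hV := le_switchValue (σ := σ) hpos v
    unfold redCost at hred
    rcases B.switchValue_eq_or_of_NV_lt w he'.isBVertex_right (huv.trans hgt) with h | h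
    · left; linarith
    · right; linarith

/-- If the value of `t` increases, then the new path from `t` cannot bypass a settled vertex. -/
lemma switchValue_t_eq_or_le (B : IsValue n σ V) (he : BEdge n u w) (hpos : 0 < redCost n V u w)
    (hv : IsBVertex n v) (huv : NV n u < NV n v) (hset : IsSettled n V v) :
    switchValue n σ V u w BV.t = V BV.t ∨
      switchValue n σ V u w BV.t ≤ potential n v + switchValue n σ V u w v := by
  have B' := B.update he hpos
  have hb := B'.bellman BV.t trivial
  have ht := B'.isPolicy BV.t trivial
  generalize Function.update σ u w BV.t = q' at hb ht
  obtain ⟨k, hk, hkn, rfl⟩ := bEdge_t_iff.1 ht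
  have hpot := potential_nonneg ht.isBVertex_right
  rw [rB_travel, zero_add] at hb
  rcases le_or_gt (NV n (BV.a k)) (NV n v) with hle | hgt
  · right
    rcases B.switchValue_le_of_isOptimalAt he hpos hv huv hset.1 ht.isBVertex_right hle
      (by simp) with h | h <;> linarith
  · left
    have hold := hset.2 k hk hkn hgt
    have hV := le_switchValue (σ := σ) hpos BV.t
    rcases B.switchValue_eq_or_of_NV_lt w ht.isBVertex_right (huv.trans hgt) with h | h <;> linarith

lemma redCost_switchValue_le_or_neg (B : IsValue n σ V) (he : BEdge n u w)
    (hpos : 0 < redCost n V u w) (hs : v ≠ BV.s) (huv : NV n u < NV n v)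
    (hset : IsSettled n V v) {w' : BV} (hvw : BEdge n v w') :
    redCost n (switchValue n σ V u w) v w' ≤ redCost n V v w' ∨
      redCost n (switchValue n σ V u w) v w' < 0 := by
  have hT := B.switchValue_t_eq_or_le he hpos hvw.isBVertex_left huv hset
  have hV := le_switchValue (σ := σ) hpos v
  have hr := rB_le_potential_sub hvw
  unfold redCost
  rcases hvw.eq_t_or_NV_lt hs with ⟨rfl, hr'⟩ | hlt
  · rcases hT with h | h
    · left; linarith
    · right; linarith
  · rcases B.switchValue_eq_or_of_NV_lt w hvw.isBVertex_right (huv.trans hlt) with h | h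
    · left; linarith
    · rcases hT with h' | h'
      · left; linarith
      · right; linarith

lemma switchValue_a_le (B : IsValue n σ V) (hpos : 0 < redCost n V u w) {k : ℕ} (hk : 1 ≤ k)
    (hkn : k ≤ n) (huk : NV n u < 2 * k) (h : V (BV.a k) ≤ V BV.t) :
    switchValue n σ V u w (BV.a k) ≤ switchValue n σ V u w BV.t := by
  have hk' : IsBVertex n (BV.a k) := ⟨hk, hkn⟩
  have hV := le_switchValue (σ := σ) hpos BV.t
  have hpot := potential_nonneg hk'
  rcases B.switchValue_eq_or_of_NV_lt w hk' huk with h | h <;> linarith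

lemma isSettled_switchValue (B : IsValue n σ V) (he : BEdge n u w) (hpos : 0 < redCost n V u w)
    (hs : v ≠ BV.s) (huv : NV n u < NV n v) (hset : IsSettled n V v) :
    IsSettled n (switchValue n σ V u w) v := by
  refine ⟨fun w' hvw => ?_, fun k hk hkn hvk =>
    B.switchValue_a_le hpos hk hkn (huv.trans hvk) (hset.2 k hk hkn hvk)⟩
  rcases B.redCost_switchValue_le_or_neg he hpos hs huv hset hvw with h | h
  · exact h.trans (hset.1 w' hvw)
  · exact h.le

lemma redCost_switchValue_self (B : IsValue n σ V) (w : BV) {w' : BV}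
    (hw' : BEdge n u w') :
    redCost n (switchValue n σ V u w) u w' = redCost n V u w' ∧ redCost n V u w' ≤ 0 ∨
      redCost n (switchValue n σ V u w) u w' = redCost n V u w' - redCost n V u w := by
  have hself := switchValue_of_visits (n := n) (V := V) w (Visits.refl σ u)
  by_cases hvis : Visits σ u w'
  · left
    have hle := B.le_of_visits hw'.isBVertex_right hvis
    have hr := rB_le_potential_sub hw'
    unfold redCost at *
    rw [hself, switchValue_of_visits w hvis]
    unfold redCost
    constructor <;> linarith
  · right
    rw [redCost, hself, switchValue_of_not_visits w hvis]
    unfold redCost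
    ring

lemma redCost_switchValue_policy (B : IsValue n σ V) (w : BV) (hu : IsBVertex n u)
    (hs : u ≠ BV.s) : redCost n (switchValue n σ V u w) u (σ u) = -redCost n V u w := by
  have hzero := B.redCost_policy hu
  rw [redCost, switchValue_of_visits w (.refl _ _),
    switchValue_of_not_visits w (B.not_visits_policy_self hu hs)]
  unfold redCost at *
  linarith

lemma redCost_switchValue_self_neg (B : IsValue n σ V) (hpos : 0 < redCost n V u w) {w' : BV}
    (hw' : BEdge n u w') (hneg : redCost n V u w' < 0) :
    redCost n (switchValue n σ V u w) u w' < 0 := by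
  rcases B.redCost_switchValue_self w hw' with ⟨h, -⟩ | h <;> linarith

lemma isSettled_switchValue_self (B : IsValue n σ V) (S : DominantSwitch n V u w) :
    IsSettled n (switchValue n σ V u w) u := by
  have hopt : IsOptimalAt n (switchValue n σ V u w) u := by
    intro w' hw'
    rcases B.redCost_switchValue_self w hw' with ⟨h, h0⟩ | h
    · exact h.trans_le h0
    · linarith [S.best w' hw']
  refine ⟨hopt, fun k hk hkn huk => ?_⟩
  have htravel : BEdge n BV.t (BV.a k) := .travel hk hkn
  rcases eq_or_ne u BV.t with rfl | hut
  · simpa [redCost, rB_travel] using hopt _ htravel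
  · have hu := S.edge.isBVertex_left
    have htu : NV n BV.t < NV n u := lt_of_le_of_ne (one_le_NV hu) fun h =>
      hut (NV_injOn n (show IsBVertex n BV.t from trivial) hu h).symm
    have ht := S.low BV.t trivial htu _ htravel
    rw [redCost, rB_travel] at ht
    exact B.switchValue_a_le S.pos hk hkn huk (by linarith)

end IsValue

end Settled

/-! ### The objective of the largest increase rule -/

section Objective

variable {n : ℕ} {p : BV → ℚ} {σ : BV → BV} {V V' : BV → ℚ} {X : Set (BV × BV)} {π : DV → DV}
  {v w : BV}

lemma mem_BVSet (h : IsBVertex n v) : v ∈ BVSet n := by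
  cases v <;> simp_all [BVSet, IsBVertex]

lemma base_mem_DAgentSet (h : IsBVertex n v) : DV.base v ∈ DAgentSet n := by
  simp [DAgentSet, mem_BVSet h]

lemma x_mem_DAgentSet (h : DEdgePair n v w) : DV.x v w ∈ DAgentSet n := by
  simp [DAgentSet, mem_BVSet h.1.isBVertex_left, mem_BVSet h.1.isBVertex_right, h]

lemma gadgetValue_insert (h : DEdgePair n v w) :
    gadgetValue n p (insert (v, w) X) V =
      Function.update (gadgetValue n p X V) (DV.x v w) (V v + p v * redCost n V v w) := by
  funext u
  rcases eq_or_ne u (DV.x v w) with rfl | hu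
  · rw [Function.update_self, gadgetValue_opened h (Set.mem_insert _ _)]
  rw [Function.update_of_ne hu]
  cases u with
  | x a b =>
    have hmem : (a, b) ∈ insert (v, w) X ↔ (a, b) ∈ X :=
      Set.mem_insert_iff.trans (or_iff_right fun h => hu (by cases h; rfl))
    simp only [gadgetValue]
    split_ifs <;> tauto
  | _ => rfl

lemma gadgetValue_mono (hp : ∀ v, 0 ≤ p v) (hp1 : ∀ v, IsBVertex n v → p v ≤ 1)
    (hV : ∀ v, V v ≤ V' v) (u : DV) : gadgetValue n p X V u ≤ gadgetValue n p X V' u := by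
  have hmix : ∀ v w, IsBVertex n v →
      V v + p v * redCost n V v w ≤ V' v + p v * redCost n V' v w := by
    intro v w hv
    have hstay : (1 - p v) * V v ≤ (1 - p v) * V' v :=
      mul_le_mul_of_nonneg_left (hV v) (sub_nonneg.2 (hp1 v hv))
    have hmove : p v * V w ≤ p v * V' w := mul_le_mul_of_nonneg_left (hV w) (hp v)
    unfold redCost
    linarith
  cases u with
  | base v => simp only [gadgetValue]; split_ifs; exacts [hV v, le_rfl]
  | x v w =>
    simp only [gadgetValue]
    split_ifs with h
    exacts [hmix v w h.1.isBVertex_left, hV v, le_rfl]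
  | y v w => simp only [gadgetValue]; split_ifs with h; exacts [hmix v w h.1.isBVertex_left, le_rfl]
  | z v w => simp only [gadgetValue]; split_ifs; exacts [add_le_add_right (hV w) _, le_rfl]

namespace Simulates

lemma LIobj_openGadget (D : Simulates n σ X π) (B : IsValue n σ V) (hp : ∀ v, p v ≠ 0)
    (he : DEdgePair n v w) (hX : (v, w) ∉ X) :
    LIobj n p (Function.update π (DV.x v w) (DV.y v w)) =
      LIobj n p π + p v * redCost n V v w := by
  have hmem := x_mem_DAgentSet he
  rw [LIobj, LIobj, (D.openGadget v w).dVal_eq B hp, D.dVal_eq B hp, gadgetValue_insert he,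
    Finset.sum_update_of_mem hmem, Finset.sum_eq_add_sum_sdiff_singleton_of_mem hmem,
    gadgetValue_closed he hX]
  ring

lemma LIobj_closeGadget (D : Simulates n σ X π) (B : IsValue n σ V) (hp : ∀ v, p v ≠ 0)
    (he : DEdgePair n v w) (hX : (v, w) ∈ X) (hw : w ≠ σ v) :
    LIobj n p (Function.update π (DV.x v w) (DV.base v)) =
      LIobj n p π - p v * redCost n V v w := by
  have hopen := (D.closeGadget hw).LIobj_openGadget B hp he (by simp)
  rw [Function.update_idem, ← D.opened v w he hX, Function.update_eq_self] at hopen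
  rw [hopen, add_sub_cancel_right]

lemma LIobj_add_le_redirect (D : Simulates n σ X π) (B : IsValue n σ V) (hp : ∀ v, 0 < p v)
    (hp1 : ∀ v, IsBVertex n v → p v ≤ 1) (he : DEdgePair n v w) (hX : (v, w) ∈ X)
    (hpos : 0 < redCost n V v w) :
    LIobj n p π + redCost n V v w ≤ LIobj n p (Function.update π (DV.base v) (DV.x v w)) := by
  have hp0 : ∀ v, p v ≠ 0 := fun v => (hp v).ne'
  have hv := he.1.isBVertex_left
  rw [LIobj, LIobj, D.dVal_eq B hp0,
    (D.redirect he.2 hX).dVal_eq (B.update he.1 hpos) hp0]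
  have hsingle := Finset.single_le_sum (fun u _ => sub_nonneg.2 <|
    gadgetValue_mono (X := X) (fun v => (hp v).le) hp1 (le_switchValue (σ := σ) hpos) u)
    (base_mem_DAgentSet hv)
  rw [Finset.sum_sub_distrib, gadgetValue_base hv, gadgetValue_base hv,
    switchValue_of_visits w (.refl _ _)] at hsingle
  linarith

end Simulates

end Objective

/-! ### The largest increase rule on `𝔇_n` -/

/-- Every open gadget of an inactive edge can be closed with profit and belongs to a settled
vertex. -/
def IsIdle (n : ℕ) (σ : BV → BV) (V : BV → ℚ) (X : Set (BV × BV)) : Prop :=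
  ∀ v w, DEdgePair n v w → (v, w) ∈ X → w ≠ σ v → redCost n V v w < 0 ∧ IsSettled n V v

/-- The gadget of the dominant switch `(v₀, w₀)` has been opened, but `v₀` has not yet been
redirected into it. The other open gadgets of inactive edges are as in an idle state, and belong to
vertices after `v₀`. -/
structure IsPending (n : ℕ) (σ : BV → BV) (V : BV → ℚ) (X : Set (BV × BV)) (v₀ w₀ : BV) :
    Prop where
  switch : DominantSwitch n V v₀ w₀
  mem : (v₀, w₀) ∈ X
  others : ∀ v w, DEdgePair n v w → (v, w) ∈ X → w ≠ σ v →
    (v, w) = (v₀, w₀) ∨ redCost n V v w < 0 ∧ IsSettled n V v ∧ NV n v₀ < NV n v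

/-- A state that the largest increase rule can reach from the twin policy of `pi0 n` in `k`
steps. -/
def TracksLI (n k : ℕ) (π : DV → DV) : Prop :=
  ∃ σ V X, Tracks n k σ V X π ∧ (IsIdle n σ V X ∨ ∃ v w, IsPending n σ V X v w)

section LargestIncrease

variable {n k : ℕ} {σ : BV → BV} {V : BV → ℚ} {X : Set (BV × BV)} {π : DV → DV} {v w v₀ w₀ : BV}

lemma IsIdle.notMem_of_redCost_pos (I : IsIdle n σ V X) (B : IsValue n σ V) (he : BEdge n v w)
    (hpos : 0 < redCost n V v w) : (v, w) ∉ X := fun hX =>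
  (I v w ⟨he, ne_sink_of_redCost_pos he hpos⟩ hX
    (B.ne_policy_of_redCost_ne_zero he.isBVertex_left hpos.ne')).1.not_gt hpos

lemma IsIdle.closeGadget (I : IsIdle n σ V X) (e : BV × BV) : IsIdle n σ V (X \ {e}) :=
  fun v w he hX => I v w he hX.1

lemma IsIdle.isPending_openGadget (I : IsIdle n σ V X) (T : Tracks n k σ V X π)
    (he : DEdgePair n v w) (hX : (v, w) ∉ X) (hpos : 0 < redCost n V v w)
    (hmax : ∀ a b, DImproving n (pSpec n) π a b → LIobj n (pSpec n) (Function.update π a b) ≤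
      LIobj n (pSpec n) (Function.update π (DV.x v w) (DV.y v w))) :
    IsPending n σ V (insert (v, w) X) v w := by
  have hp := pSpec_ne_zero n
  rw [T.sim.LIobj_openGadget T.value hp he hX] at hmax
  refine ⟨T.value.dominantSwitch_of_forall_pSpec_mul_le he.1 hpos fun a b hab hpos' => ?_,
    Set.mem_insert _ _, fun a b hab hmem hne => hmem.imp_right fun hmem => ?_⟩
  · have hab' : DEdgePair n a b := ⟨hab, ne_sink_of_redCost_pos hab hpos'⟩
    have hX' := I.notMem_of_redCost_pos T.value hab hpos'
    have hle := hmax _ _ ((T.sim.dImproving_iff T.value (pSpec_pos n)).2 (.opening hab' hX' hpos'))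
    rw [T.sim.LIobj_openGadget T.value hp hab' hX'] at hle
    linarith
  · obtain ⟨hneg, hset⟩ := I a b hab hmem hne
    refine ⟨hneg, hset, not_le.1 fun hle => ?_⟩
    rcases hle.eq_or_lt with heq | hlt
    · obtain rfl := NV_injOn n hab.1.isBVertex_left he.1.isBVertex_left heq
      exact hpos.not_ge (hset.1 w he.1)
    · have hdom := T.value.pSpec_mul_abs_redCost_lt_of_NV_lt hab.1 hneg.ne he.1 hlt
      have hle' := hmax _ _ ((T.sim.dImproving_iff T.value (pSpec_pos n)).2
        (.closing hab hmem hneg))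
      rw [T.sim.LIobj_closeGadget T.value hp hab hmem hne] at hle'
      rw [abs_of_pos hpos, abs_of_neg hneg] at hdom
      linarith

lemma IsPending.isIdle_redirect (P : IsPending n σ V X v₀ w₀) (B : IsValue n σ V) :
    IsIdle n (Function.update σ v₀ w₀) (switchValue n σ V v₀ w₀) X := by
  intro v w he hX hne
  rcases eq_or_ne v v₀ with rfl | hv
  · rw [Function.update_self] at hne
    refine ⟨?_, B.isSettled_switchValue_self P.switch⟩
    rcases eq_or_ne w (σ v) with rfl | hw
    · rw [B.redCost_switchValue_policy w₀ he.1.isBVertex_left he.2]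
      exact neg_neg_of_pos P.switch.pos
    · obtain h | ⟨hneg, -⟩ := P.others v w he hX hw
      · exact absurd (congrArg Prod.snd h) hne
      · exact B.redCost_switchValue_self_neg P.switch.pos he.1 hneg
  · rw [Function.update_of_ne hv] at hne
    obtain h | ⟨hneg, hset, hlt⟩ := P.others v w he hX hne
    · exact absurd (congrArg Prod.fst h) hv
    · refine ⟨?_, B.isSettled_switchValue P.switch.edge P.switch.pos he.2 hlt hset⟩
      exact (B.redCost_switchValue_le_or_neg P.switch.edge P.switch.pos he.2 hlt hset he.1).elim
        (·.trans_lt hneg) id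

/-- Redirecting the pending vertex gains at least `1 / 4`, more than any gadget switch can. -/
lemma IsPending.lt_LIobj_redirect (P : IsPending n σ V X v₀ w₀) (T : Tracks n k σ V X π)
    (he : BEdge n v w) :
    LIobj n (pSpec n) π + pSpec n v * |redCost n V v w| <
      LIobj n (pSpec n) (Function.update π (DV.base v₀) (DV.x v₀ w₀)) := by
  have hS := P.switch
  have hgain := T.sim.LIobj_add_le_redirect T.value (pSpec_pos n) (fun _ => pSpec_le_one)
    ⟨hS.edge, ne_sink_of_redCost_pos hS.edge hS.pos⟩ P.mem hS.pos
  have hquarter := T.value.quarter_le_abs_redCost hS.edge hS.pos.ne'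
  rw [abs_of_pos hS.pos] at hquarter
  linarith [T.value.pSpec_mul_abs_redCost_lt_quarter he]

lemma tracksLI_of_isIdle (hI : IsIdle n σ V X) (T : Tracks n k σ V X π) {u u' : DV}
    (himp : DImproving n (pSpec n) π u u')
    (hmax : ∀ a b, DImproving n (pSpec n) π a b →
      LIobj n (pSpec n) (Function.update π a b) ≤ LIobj n (pSpec n) (Function.update π u u')) :
    TracksLI n (k + 1) (Function.update π u u') := by
  rcases (T.sim.dImproving_iff T.value (pSpec_pos n)).1 himp with
    ⟨he, hX, hpos⟩ | ⟨he, hX, hpos⟩ | ⟨he, hX, hneg⟩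
  · exact ⟨_, _, _, T.openGadget _ _, .inr ⟨_, _, hI.isPending_openGadget T he hX hpos hmax⟩⟩
  · exact absurd hX (hI.notMem_of_redCost_pos T.value he.1 hpos)
  · exact ⟨_, _, _, T.closeGadget
      (T.value.ne_policy_of_redCost_ne_zero he.1.isBVertex_left hneg.ne), .inl (hI.closeGadget _)⟩

lemma tracksLI_of_isPending (hn : 1 ≤ n) (hP : IsPending n σ V X v₀ w₀)
    (T : Tracks n k σ V X π) {u u' : DV} (himp : DImproving n (pSpec n) π u u')
    (hmax : ∀ a b, DImproving n (pSpec n) π a b →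
      LIobj n (pSpec n) (Function.update π a b) ≤ LIobj n (pSpec n) (Function.update π u u')) :
    TracksLI n (k + 1) (Function.update π u u') := by
  have hp := pSpec_ne_zero n
  have hne : ∀ {v w}, DEdgePair n v w → redCost n V v w ≠ 0 → w ≠ σ v := fun he =>
    T.value.ne_policy_of_redCost_ne_zero he.1.isBVertex_left
  have hS := hP.switch
  have hmax₀ := hmax _ _ ((T.sim.dImproving_iff T.value (pSpec_pos n)).2
    (.redirecting ⟨hS.edge, ne_sink_of_redCost_pos hS.edge hS.pos⟩ hP.mem hS.pos))
  rcases (T.sim.dImproving_iff T.value (pSpec_pos n)).1 himp with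
    ⟨he, hX, hpos⟩ | ⟨he, hX, hpos⟩ | ⟨he, hX, hneg⟩
  · have hlt := hP.lt_LIobj_redirect T he.1
    rw [abs_of_pos hpos, ← T.sim.LIobj_openGadget T.value hp he hX] at hlt
    exact absurd hmax₀ hlt.not_ge
  · obtain h | ⟨hneg, -⟩ := hP.others _ _ he hX (hne he hpos.ne')
    · cases h
      exact ⟨_, _, _, T.redirect hn hX hS.admissible, .inl (hP.isIdle_redirect T.value)⟩
    · exact absurd hpos hneg.not_gt
  · have hlt := hP.lt_LIobj_redirect T he.1
    rw [abs_of_neg hneg, mul_neg, ← sub_eq_add_neg,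
      ← T.sim.LIobj_closeGadget T.value hp he hX (hne he hneg.ne)] at hlt
    exact absurd hmax₀ hlt.not_ge

lemma TracksLI.of_liStep (hn : 1 ≤ n) (T : TracksLI n k π) {π' : DV → DV}
    (h : LIStep n (pSpec n) π π') : TracksLI n (k + 1) π' := by
  obtain ⟨σ, V, X, T, hI | ⟨v₀, w₀, hP⟩⟩ := T <;> obtain ⟨u, u', himp, hmax, rfl⟩ := h
  · exact tracksLI_of_isIdle hI T himp hmax
  · exact tracksLI_of_isPending hn hP T himp hmax

lemma tracksLI_twin_pi0 (hn : 1 ≤ n) : TracksLI n 0 (twin (pi0 n)) :=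
  ⟨_, _, _, tracks_twin_pi0 hn, .inl fun _ _ _ hX hne => absurd hX hne⟩

end LargestIncrease

/-- With probabilities `p_v = 2^{-𝒩_V(v)(n+5)}`, each of Bland's, Dantzig's and the Largest
Increase policy iteration started at the twin policy of `π_0` performs at least `2^n - 1`
improving switches before terminating. -/
theorem stmt0 (n : ℕ) (hn : 1 ≤ n) :
    (∀ N : DV → DV → ℕ, IsDBlandNumbering n N →
      ∀ (f : ℕ → (DV → DV)) (m : ℕ), f 0 = twin (pi0 n) →
        (∀ k < m, IsBlandStepD n (pSpec n) N (f k) (f (k + 1))) →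
        (∀ u u', ¬ DImproving n (pSpec n) (f m) u u') → 2 ^ n - 1 ≤ m) ∧
    (∀ (f : ℕ → (DV → DV)) (m : ℕ), f 0 = twin (pi0 n) →
        (∀ k < m, DantzigStep n (pSpec n) (f k) (f (k + 1))) →
        (∀ u u', ¬ DImproving n (pSpec n) (f m) u u') → 2 ^ n - 1 ≤ m) ∧
    (∀ (f : ℕ → (DV → DV)) (m : ℕ), f 0 = twin (pi0 n) →
        (∀ k < m, LIStep n (pSpec n) (f k) (f (k + 1))) →
        (∀ u u', ¬ DImproving n (pSpec n) (f m) u u') → 2 ^ n - 1 ≤ m) := by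
  have start : ∃ σ V X, Tracks n 0 σ V X (twin (pi0 n)) := ⟨_, _, _, tracks_twin_pi0 hn⟩
  refine ⟨fun N hN => ?_, ?_, ?_⟩
  · refine two_pow_sub_one_le_of_run hn start (fun k π π' => ?_) fun _ _ => id
    rintro ⟨σ, V, X, T⟩ hstep
    exact T.exists_tracks_of_isBlandStepD hn hN hstep
  · refine two_pow_sub_one_le_of_run hn start (fun k π π' => ?_) fun _ _ => id
    rintro ⟨σ, V, X, T⟩ hstep
    exact T.exists_tracks_of_dantzigStep hn hstep
  · exact two_pow_sub_one_le_of_run hn (tracksLI_twin_pi0 hn)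
      (fun _ _ _ T hstep => T.of_liStep hn hstep) fun _ _ ⟨σ, V, X, T, _⟩ => ⟨σ, V, X, T⟩
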